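/- arXiv:1709.05322 — 5 statements merged into one kernel-verified Lean document; each statement's English description precedes it below -/
import Mathlib

section
/- Let X be a Banach space, let T be a weakly almost periodic linear operator on X, and let (a_k)_{k≥1} be a sequence of scalars (real if X is a real Banach space) such that sup_n (1/n)∑_{k=1}^n |a_k| φ(|a_k|) < ∞ for some strictly increasing function φ: ℝ⁺ → ℝ⁺ with φ(x) → ∞. Then for every flight vector x of T, lim_n ‖(1/n)∑_{k=1}^n a_k T^k x‖ = 0. -/
open Filter Finset

/-!
For a power bounded `T`, if `T ^ n_j x → 0` weakly then some convex combination of the functions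
`f ↦ ‖f (T ^ n_j x)‖` is uniformly small on the dual unit ball: otherwise Hahn–Banach separates
their convex hull from `{g | g < ε}` by a positive functional on `C(K)`, that is, a finite measure,
against dominated convergence. Applying this to `f ∘ T ^ k` and averaging over `k`, the shifts by
the `n_j` cost only boundary terms, so the Cesàro means of `‖f (T ^ k x)‖` tend to `0` uniformly in
`‖f‖ ≤ 1`. The growth of `φ` makes `a` uniformly integrable in Cesàro mean; the terms with
`‖a k‖ ≤ R` are controlled by these means and the remaining ones are negligible, uniformly in `n`.
-/

open Bornology Topology
open scoped CompactlySupported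

section CompactSpace

variable {K : Type*} [TopologicalSpace K] [CompactSpace K]

theorem exists_positiveLinearMap_le_of_forall_exists_le {s : Set C(K, ℝ)} (hs : Convex ℝ s)
    {ε : ℝ} (hε : 0 < ε) (h : ∀ g ∈ s, ∃ y, ε ≤ g y) :
    ∃ (Λ : C(K, ℝ) →ₚ[ℝ] ℝ) (u : ℝ), 0 < u ∧ ∀ g ∈ s, u ≤ Λ g := by
  let D : Set C(K, ℝ) := {g | ∀ y, g y < ε}
  have hD_open : IsOpen D := by
    simpa only [D, Set.mapsTo_univ_iff, Set.mem_Iio] using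
      ContinuousMap.isOpen_setOfPred_mapsTo (X := K) isCompact_univ (isOpen_Iio (a := ε))
  have hD_convex : Convex ℝ D := by
    have hD_eq : D = ⋂ y, {g : C(K, ℝ) | g y < ε} := by ext; simp [D]
    rw [hD_eq]
    exact convex_iInter fun y ↦ convex_halfSpace_lt (f := fun g : C(K, ℝ) ↦ g y)
      ⟨fun _ _ ↦ rfl, fun _ _ ↦ rfl⟩ ε
  have hD_disj : Disjoint D s := by
    refine Set.disjoint_left.2 fun g hgD hgs ↦ ?_
    obtain ⟨y, hy⟩ := h g hgs
    exact hy.not_gt (hgD y)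
  obtain ⟨L, u, hLD, hLs⟩ := geometric_hahn_banach_open hD_convex hD_open hs hD_disj
  have hu : 0 < u := by simpa using hLD 0 fun _ ↦ hε
  have hL_nonneg : ∀ g, 0 ≤ g → 0 ≤ L g := by
    intro g hg
    by_contra! hneg
    -- A negative value `L g` could be rescaled to `u` by a nonpositive multiple of `g`, inside `D`.
    have hmem : (u / L g) • g ∈ D := fun y ↦
      (mul_nonpos_of_nonpos_of_nonneg (div_nonpos_of_nonneg_of_nonpos hu.le hneg.le)
        (hg y)).trans_lt hε
    have hlt := hLD _ hmem
    rw [map_smul, smul_eq_mul, div_mul_cancel₀ _ hneg.ne] at hlt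
    exact lt_irrefl u hlt
  exact ⟨.mk₀ L.toLinearMap hL_nonneg, u, hu, hLs⟩

variable [T2Space K] {ι : Type*} {l : Filter ι} [l.IsCountablyGenerated]

theorem exists_isFiniteMeasure_integral_eq [MeasurableSpace K] [BorelSpace K]
    (Λ : C(K, ℝ) →ₚ[ℝ] ℝ) :
    ∃ μ : MeasureTheory.Measure K, MeasureTheory.IsFiniteMeasure μ ∧
      ∀ g : C(K, ℝ), ∫ y, g y ∂μ = Λ g := by
  let Λc : C_c(K, ℝ) →ₚ[ℝ] ℝ := PositiveLinearMap.mk₀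
    { toFun := fun g ↦ Λ (g : C(K, ℝ))
      map_add' := fun g h ↦ map_add Λ (g : C(K, ℝ)) h
      map_smul' := fun c g ↦ map_smul Λ c (g : C(K, ℝ)) }
    fun g hg ↦ map_nonneg Λ (a := (g : C(K, ℝ))) hg
  exact ⟨RealRMK.rieszMeasure Λc, inferInstance, fun g ↦
    RealRMK.integral_rieszMeasure Λc (CompactlySupportedContinuousMap.continuousMapEquiv g)⟩

theorem tendsto_positiveLinearMap_of_tendsto_pointwise (Λ : C(K, ℝ) →ₚ[ℝ] ℝ)
    {F : ι → C(K, ℝ)} {g : C(K, ℝ)} {B : ℝ} (hB : ∀ i y, ‖F i y‖ ≤ B)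
    (hF : ∀ y, Tendsto (fun i ↦ F i y) l (𝓝 (g y))) :
    Tendsto (fun i ↦ Λ (F i)) l (𝓝 (Λ g)) := by
  let _ : MeasurableSpace K := borel K
  have : BorelSpace K := ⟨rfl⟩
  obtain ⟨μ, _, hμ⟩ := exists_isFiniteMeasure_integral_eq Λ
  simp only [← hμ]
  exact MeasureTheory.tendsto_integral_filter_of_dominated_convergence (fun _ ↦ B)
    (.of_forall fun i ↦ (F i).continuous.measurable.aestronglyMeasurable)
    (.of_forall fun i ↦ .of_forall (hB i)) (MeasureTheory.integrable_const B) (.of_forall hF)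

theorem exists_mem_convexHull_range_forall_lt [l.NeBot] {F : ι → C(K, ℝ)} {B : ℝ}
    (hB : ∀ i y, ‖F i y‖ ≤ B) (hF : ∀ y, Tendsto (fun i ↦ F i y) l (𝓝 0))
    {ε : ℝ} (hε : 0 < ε) : ∃ g ∈ convexHull ℝ (Set.range F), ∀ y, g y < ε := by
  by_contra! h
  obtain ⟨Λ, u, hu, hΛ⟩ :=
    exists_positiveLinearMap_le_of_forall_exists_le (convex_convexHull ℝ _) hε h
  have hΛF : Tendsto (fun i ↦ Λ (F i)) l (𝓝 (Λ 0)) :=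
    tendsto_positiveLinearMap_of_tendsto_pointwise Λ hB hF
  rw [map_zero] at hΛF
  exact hu.not_ge (ge_of_tendsto' hΛF fun i ↦ hΛ _ (subset_convexHull ℝ _ (Set.mem_range_self i)))

end CompactSpace

theorem sum_Icc_le_sum_Icc_add {g : ℕ → ℝ} {C : ℝ} (hg : ∀ k, 0 ≤ g k) (hgC : ∀ k, g k ≤ C)
    (n p : ℕ) : ∑ k ∈ Icc 1 n, g k ≤ ∑ k ∈ Icc 1 n, g (k + p) + p * C := by
  simp only [← Ico_add_one_right_eq_Icc]
  calc ∑ k ∈ Ico 1 (n + 1), g k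
      ≤ ∑ k ∈ Ico 1 (n + 1 + p), g k :=
        sum_le_sum_of_subset_of_nonneg (Ico_subset_Ico_right (by lia)) fun k _ _ ↦ hg k
    _ = ∑ k ∈ Ico (1 + p) (n + 1 + p), g k + ∑ k ∈ Ico 1 (1 + p), g k := by
        rw [← sum_Ico_consecutive g (show 1 ≤ 1 + p by lia) (by lia), add_comm]
    _ ≤ ∑ k ∈ Ico 1 (n + 1), g (k + p) + p * C := by
        rw [← sum_Ico_add']
        gcongr
        simpa using sum_le_card_nsmul (Ico 1 (1 + p)) g C fun k _ ↦ hgC k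

theorem sum_Icc_le_of_sum_mul_shift_le {ι : Type*} {s : Finset ι} {w : ι → ℝ}
    (hw : ∀ i ∈ s, 0 ≤ w i) (hw_sum : ∑ i ∈ s, w i = 1) (m : ι → ℕ) {g : ℕ → ℝ} {C δ : ℝ}
    (hg : ∀ k, 0 ≤ g k) (hgC : ∀ k, g k ≤ C) (hδ : ∀ k, ∑ i ∈ s, w i * g (k + m i) ≤ δ) (n : ℕ) :
    ∑ k ∈ Icc 1 n, g k ≤ n * δ + (∑ i ∈ s, w i * m i) * C :=
  calc ∑ k ∈ Icc 1 n, g k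
      = ∑ i ∈ s, w i * ∑ k ∈ Icc 1 n, g k := by rw [← sum_mul, hw_sum, one_mul]
    _ ≤ ∑ i ∈ s, w i * (∑ k ∈ Icc 1 n, g (k + m i) + m i * C) :=
        sum_le_sum fun i hi ↦
          mul_le_mul_of_nonneg_left (sum_Icc_le_sum_Icc_add hg hgC n (m i)) (hw i hi)
    _ = ∑ k ∈ Icc 1 n, ∑ i ∈ s, w i * g (k + m i) + (∑ i ∈ s, w i * m i) * C := by
        rw [sum_comm]
        simp only [mul_add, sum_add_distrib, mul_sum, sum_mul, mul_assoc]
    _ ≤ n * δ + (∑ i ∈ s, w i * m i) * C := by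
        gcongr
        simpa using sum_le_card_nsmul (Icc 1 n) _ δ fun k _ ↦ hδ k

/-- Uniform integrability of `a` in Cesàro mean: the averages over `1, …, n` of the `‖a k‖` larger
than `R` tend to `0` as `R → ∞`, uniformly in `n`. The division by `n` is cleared. -/
def CesaroUniformIntegrable {E : Type*} [Norm E] (a : ℕ → E) : Prop :=
  ∀ ε > 0, ∀ᶠ R : ℝ in atTop, ∀ n : ℕ, ∑ k ∈ Icc 1 n with R < ‖a k‖, ‖a k‖ ≤ ε * n

theorem cesaroUniformIntegrable_of_average_norm_mul_le {E : Type*} [SeminormedAddGroup E]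
    {a : ℕ → E} {φ : ℝ → ℝ} (hφ_nonneg : ∀ t, 0 ≤ t → 0 ≤ φ t) (hφ_top : Tendsto φ atTop atTop)
    {C : ℝ} (ha : ∀ n : ℕ, (n : ℝ)⁻¹ * ∑ k ∈ Icc 1 n, ‖a k‖ * φ ‖a k‖ ≤ C) :
    CesaroUniformIntegrable a := by
  intro ε hε
  have hC : 0 ≤ C := by simpa using ha 0
  filter_upwards [eventually_forall_ge_atTop.2 (hφ_top.eventually_ge_atTop ((C + 1) / ε))]
    with R hR n
  rcases n.eq_zero_or_pos with rfl | hn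
  · simp
  have hterm_nonneg : ∀ k, 0 ≤ ‖a k‖ * φ ‖a k‖ := fun k ↦
    mul_nonneg (norm_nonneg _) (hφ_nonneg _ (norm_nonneg _))
  have hsum : (C + 1) / ε * ∑ k ∈ Icc 1 n with R < ‖a k‖, ‖a k‖ ≤ n * C :=
    calc (C + 1) / ε * ∑ k ∈ Icc 1 n with R < ‖a k‖, ‖a k‖
        ≤ ∑ k ∈ Icc 1 n with R < ‖a k‖, ‖a k‖ * φ ‖a k‖ := by
          rw [mul_sum]
          refine sum_le_sum fun k hk ↦ ?_
          rw [mul_comm]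
          exact mul_le_mul_of_nonneg_left (hR _ (mem_filter.1 hk).2.le) (norm_nonneg _)
      _ ≤ ∑ k ∈ Icc 1 n, ‖a k‖ * φ ‖a k‖ :=
          sum_le_sum_of_subset_of_nonneg (filter_subset _ _) fun k _ _ ↦ hterm_nonneg k
      _ ≤ n * C := (inv_mul_le_iff₀ (by exact_mod_cast hn)).1 (ha n)
  rw [div_mul_eq_mul_div, div_le_iff₀ hε] at hsum
  refine le_of_mul_le_mul_left (hsum.trans ?_) (by positivity : 0 < C + 1)
  linarith [show 0 ≤ ε * n by positivity]

section Normed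

variable {𝕜 : Type*} [RCLike 𝕜] {X : Type*} [NormedAddCommGroup X] [NormedSpace 𝕜 X]

theorem exists_norm_le_of_forall_dual {ι : Type*} {z : ι → X}
    (hz : ∀ f : StrongDual 𝕜 X, ∃ C, ∀ i, ‖f (z i)‖ ≤ C) : ∃ C, ∀ i, ‖z i‖ ≤ C := by
  obtain ⟨C, hC⟩ := banach_steinhaus (g := fun i ↦ NormedSpace.inclusionInDoubleDual 𝕜 X (z i)) hz
  exact ⟨C, fun i ↦ ((NormedSpace.inclusionInDoubleDualLi 𝕜).norm_map (z i)).symm.trans_le (hC i)⟩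

theorem isBounded_range_pow_of_isCompact_closure_orbit [CompleteSpace X] {T : X →L[𝕜] X}
    (hT : ∀ x : X, IsCompact (closure (Set.range fun n : ℕ ↦ toWeakSpace 𝕜 X ((T ^ n) x)))) :
    IsBounded (Set.range fun n : ℕ ↦ T ^ n) := by
  suffices h : ∃ M, ∀ n : ℕ, ‖T ^ n‖ ≤ M by
    simpa only [isBounded_iff_forall_norm_le, Set.forall_mem_range] using h
  refine banach_steinhaus fun x ↦ exists_norm_le_of_forall_dual (𝕜 := 𝕜) fun f ↦ ?_
  have hf : Continuous fun y : WeakSpace 𝕜 X ↦ f ((toWeakSpace 𝕜 X).symm y) :=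
    WeakBilin.eval_continuous _ f
  obtain ⟨C, hC⟩ := ((hT x).image hf).isBounded.exists_norm_le
  exact ⟨C, fun n ↦ hC _ ⟨_, subset_closure (Set.mem_range_self n), rfl⟩⟩

theorem exists_weights_sum_mul_norm_lt {z : ℕ → X}
    (hz : ∀ f : StrongDual 𝕜 X, Tendsto (fun j ↦ f (z j)) atTop (𝓝 0)) {ε : ℝ} (hε : 0 < ε) :
    ∃ (s : Finset ℕ) (w : ℕ → ℝ), (∀ i ∈ s, 0 ≤ w i) ∧ ∑ i ∈ s, w i = 1 ∧
      ∀ f : StrongDual 𝕜 X, ‖f‖ ≤ 1 → ∑ i ∈ s, w i * ‖f (z i)‖ < ε := by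
  let K : Set (WeakDual 𝕜 X) := WeakDual.toStrongDual ⁻¹' Metric.closedBall 0 1
  have : CompactSpace K := isCompact_iff_compactSpace.1 (WeakDual.isCompact_closedBall 0 1)
  let F : ℕ → C(K, ℝ) := fun j ↦ ⟨fun y ↦ ‖y.1 (z j)‖,
    ((WeakDual.eval_continuous (z j)).comp continuous_subtype_val).norm⟩
  obtain ⟨B, hB⟩ := exists_norm_le_of_forall_dual (𝕜 := 𝕜) (z := z) fun f ↦
    (Metric.isBounded_range_of_tendsto _ (hz f)).exists_norm_le.imp fun C hC j ↦
      hC _ (Set.mem_range_self j)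
  have hFB : ∀ j y, ‖F j y‖ ≤ B := fun j y ↦ by
    have hy : ‖WeakDual.toStrongDual y.1‖ ≤ 1 := mem_closedBall_zero_iff.1 y.2
    calc ‖F j y‖ = ‖WeakDual.toStrongDual y.1 (z j)‖ := norm_norm (y.1 (z j))
      _ ≤ 1 * ‖z j‖ := ContinuousLinearMap.le_of_opNorm_le _ hy _
      _ ≤ B := (one_mul _).trans_le (hB j)
  have hF : ∀ y, Tendsto (fun j ↦ F j y) atTop (𝓝 0) := fun y ↦
    tendsto_zero_iff_norm_tendsto_zero.1 (hz (WeakDual.toStrongDual y.1))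
  obtain ⟨g, hg, hgε⟩ := exists_mem_convexHull_range_forall_lt hFB hF hε
  rw [convexHull_range_eq_exists_affineCombination] at hg
  obtain ⟨s, w, hw, hw_sum, rfl⟩ := hg
  refine ⟨s, w, hw, hw_sum, fun f hf ↦ ?_⟩
  have hlt := hgε ⟨StrongDual.toWeakDual f, mem_closedBall_zero_iff.2 hf⟩
  rw [affineCombination_eq_linear_combination _ _ _ hw_sum, ContinuousMap.sum_apply] at hlt
  exact hlt

theorem exists_weights_sum_mul_norm_le {z : ℕ → X}
    (hz : ∀ f : StrongDual 𝕜 X, Tendsto (fun j ↦ f (z j)) atTop (𝓝 0)) {ε : ℝ} (hε : 0 < ε) :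
    ∃ (s : Finset ℕ) (w : ℕ → ℝ), (∀ i ∈ s, 0 ≤ w i) ∧ ∑ i ∈ s, w i = 1 ∧
      ∀ f : StrongDual 𝕜 X, ∑ i ∈ s, w i * ‖f (z i)‖ ≤ ε * ‖f‖ := by
  obtain ⟨s, w, hw, hw_sum, hlt⟩ := exists_weights_sum_mul_norm_lt hz hε
  refine ⟨s, w, hw, hw_sum, fun f ↦ ?_⟩
  rcases eq_or_ne f 0 with rfl | hf
  · simp
  have hf_pos : 0 < ‖f‖ := norm_pos_iff.2 hf
  have hunit := hlt ((‖f‖⁻¹ : 𝕜) • f) (norm_smul_inv_norm hf).le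
  have hscale : ∑ i ∈ s, w i * ‖((‖f‖⁻¹ : 𝕜) • f) (z i)‖ = (∑ i ∈ s, w i * ‖f (z i)‖) / ‖f‖ := by
    simp only [smul_apply, norm_smul, norm_inv, RCLike.norm_ofReal, abs_norm,
      sum_div]
    exact sum_congr rfl fun i _ ↦ by ring
  rw [hscale, div_lt_iff₀ hf_pos] at hunit
  exact hunit.le

variable (𝕜) in
/-- The Cesàro means of `‖f (z k)‖` over `k = 1, …, n` tend to `0` as `n → ∞`, uniformly over the
functionals `f` in the dual unit ball. Homogeneity in `f` replaces the restriction `‖f‖ ≤ 1`, and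
the division by `n` is cleared. -/
def UniformlyWeakCesaroNull (z : ℕ → X) : Prop :=
  ∀ ε > 0, ∀ᶠ n : ℕ in atTop, ∀ f : StrongDual 𝕜 X, ∑ k ∈ Icc 1 n, ‖f (z k)‖ ≤ ε * n * ‖f‖

theorem uniformlyWeakCesaroNull_orbit {T : X →L[𝕜] X}
    (hT : IsBounded (Set.range fun n : ℕ ↦ T ^ n)) {x : X} {m : ℕ → ℕ}
    (hm : ∀ f : StrongDual 𝕜 X, Tendsto (fun j ↦ f ((T ^ m j) x)) atTop (𝓝 0)) :
    UniformlyWeakCesaroNull 𝕜 fun k ↦ (T ^ k) x := by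
  intro ε hε
  obtain ⟨M, hM, hTM⟩ := hT.exists_pos_norm_le
  rw [Set.forall_mem_range] at hTM
  obtain ⟨s, w, hw, hw_sum, hsw⟩ :=
    exists_weights_sum_mul_norm_le hm (ε := ε / 2 / M) (by positivity)
  have hshift (f : StrongDual 𝕜 X) (k : ℕ) :
      ∑ i ∈ s, w i * ‖f ((T ^ (k + m i)) x)‖ ≤ ε / 2 * ‖f‖ := by
    simp only [pow_add]
    calc ∑ i ∈ s, w i * ‖(f ∘L T ^ k) ((T ^ m i) x)‖
        ≤ ε / 2 / M * ‖f ∘L T ^ k‖ := hsw _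
      _ ≤ ε / 2 / M * (‖f‖ * M) := by
          gcongr
          exact (f.opNorm_comp_le _).trans (mul_le_mul_of_nonneg_left (hTM k) (norm_nonneg f))
      _ = ε / 2 * ‖f‖ := by field_simp
  have hbound (f : StrongDual 𝕜 X) (k : ℕ) : ‖f ((T ^ k) x)‖ ≤ ‖f‖ * (M * ‖x‖) :=
    f.le_opNorm_of_le ((T ^ k).le_of_opNorm_le (hTM k) x)
  set N : ℝ := (∑ i ∈ s, w i * m i) * (M * ‖x‖)
  filter_upwards [(tendsto_natCast_atTop_atTop.const_mul_atTop (half_pos hε)).eventually_ge_atTop N]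
    with n hn f
  calc ∑ k ∈ Icc 1 n, ‖f ((T ^ k) x)‖
      ≤ n * (ε / 2 * ‖f‖) + (∑ i ∈ s, w i * m i) * (‖f‖ * (M * ‖x‖)) :=
        sum_Icc_le_of_sum_mul_shift_le hw hw_sum m (fun _ ↦ norm_nonneg _) (hbound f) (hshift f) n
    _ = (ε / 2 * n + N) * ‖f‖ := by ring
    _ ≤ (ε / 2 * n + ε / 2 * n) * ‖f‖ := by gcongr
    _ = ε * n * ‖f‖ := by ring

theorem norm_apply_sum_smul_le (f : StrongDual 𝕜 X) {a : ℕ → 𝕜} {z : ℕ → X} {C R : ℝ}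
    (hR : 0 ≤ R) (hz : ∀ k, ‖z k‖ ≤ C) (s : Finset ℕ) :
    ‖f (∑ k ∈ s, a k • z k)‖ ≤
      R * ∑ k ∈ s, ‖f (z k)‖ + C * (∑ k ∈ s with R < ‖a k‖, ‖a k‖) * ‖f‖ := by
  have hterm (k : ℕ) : ‖a k‖ * ‖f (z k)‖ ≤
      R * ‖f (z k)‖ + C * (if R < ‖a k‖ then ‖a k‖ else 0) * ‖f‖ := by
    split_ifs with hk
    · have hfz : ‖f (z k)‖ ≤ ‖f‖ * C := f.le_opNorm_of_le (hz k)
      calc ‖a k‖ * ‖f (z k)‖ ≤ ‖a k‖ * (‖f‖ * C) := by gcongr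
        _ = C * ‖a k‖ * ‖f‖ := by ring
        _ ≤ R * ‖f (z k)‖ + C * ‖a k‖ * ‖f‖ := le_add_of_nonneg_left (by positivity)
    · simpa using mul_le_mul_of_nonneg_right (not_lt.1 hk) (norm_nonneg (f (z k)))
  calc ‖f (∑ k ∈ s, a k • z k)‖ ≤ ∑ k ∈ s, ‖a k‖ * ‖f (z k)‖ := by
        simpa only [map_sum, map_smul, norm_smul] using norm_sum_le s fun k ↦ f (a k • z k)
    _ ≤ ∑ k ∈ s, (R * ‖f (z k)‖ + C * (if R < ‖a k‖ then ‖a k‖ else 0) * ‖f‖) :=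
        sum_le_sum fun k _ ↦ hterm k
    _ = R * ∑ k ∈ s, ‖f (z k)‖ + C * (∑ k ∈ s with R < ‖a k‖, ‖a k‖) * ‖f‖ := by
        rw [sum_add_distrib, ← mul_sum, ← sum_mul, ← mul_sum, sum_filter]

theorem CesaroUniformIntegrable.tendsto_average_smul {a : ℕ → 𝕜} (ha : CesaroUniformIntegrable a)
    {z : ℕ → X} (hz_bdd : IsBounded (Set.range z)) (hz : UniformlyWeakCesaroNull 𝕜 z) :
    Tendsto (fun n : ℕ ↦ (n : 𝕜)⁻¹ • ∑ k ∈ Icc 1 n, a k • z k) atTop (𝓝 0) := by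
  obtain ⟨C, hC, hzC⟩ := hz_bdd.exists_pos_norm_le
  rw [Set.forall_mem_range] at hzC
  refine NormedAddGroup.tendsto_nhds_zero.2 fun ε hε ↦ ?_
  obtain ⟨R, hRa, hR⟩ := ((ha (ε / 4 / C) (by positivity)).and (eventually_gt_atTop 0)).exists
  filter_upwards [hz (ε / 4 / R) (by positivity), eventually_gt_atTop 0] with n hn hn_pos
  have hn_pos' : (0 : ℝ) < n := by exact_mod_cast hn_pos
  have hsum : ‖∑ k ∈ Icc 1 n, a k • z k‖ ≤ n * (ε / 2) := by
    refine NormedSpace.norm_le_dual_bound 𝕜 _ (by positivity) fun f ↦ ?_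
    calc ‖f (∑ k ∈ Icc 1 n, a k • z k)‖
        ≤ R * ∑ k ∈ Icc 1 n, ‖f (z k)‖ + C * (∑ k ∈ Icc 1 n with R < ‖a k‖, ‖a k‖) * ‖f‖ :=
          norm_apply_sum_smul_le f hR.le hzC _
      _ ≤ R * (ε / 4 / R * n * ‖f‖) + C * (ε / 4 / C * n) * ‖f‖ := by
          gcongr
          exacts [hn f, hRa n]
      _ = n * (ε / 2) * ‖f‖ := by
          field_simp
          ring
  rw [norm_smul, norm_inv, RCLike.norm_natCast, inv_mul_lt_iff₀ hn_pos']
  exact hsum.trans_lt (by gcongr; exact half_lt_self hε)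

theorem stmt1_general (T : X →L[𝕜] X) (hT : IsBounded (Set.range fun n : ℕ ↦ T ^ n))
    (a : ℕ → 𝕜) (φ : ℝ → ℝ) (hφ_nonneg : ∀ t, 0 ≤ t → 0 ≤ φ t) (hφ_top : Tendsto φ atTop atTop)
    (ha : ∃ s : ℝ, ∀ n : ℕ, (n : ℝ)⁻¹ * ∑ k ∈ Icc 1 n, ‖a k‖ * φ ‖a k‖ ≤ s)
    (x : X)
    (hx : ∃ n : ℕ → ℕ, ∀ f : X →L[𝕜] 𝕜, Tendsto (fun j ↦ f ((T ^ n j) x)) atTop (𝓝 0)) :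
    Tendsto (fun n : ℕ ↦ ‖(n : 𝕜)⁻¹ • ∑ k ∈ Icc 1 n, a k • (T ^ k) x‖) atTop (𝓝 0) := by
  obtain ⟨C, hC⟩ := ha
  obtain ⟨m, hm⟩ := hx
  have horbit_bdd : IsBounded (Set.range fun k ↦ (T ^ k) x) := by
    simpa only [← Set.range_comp, Function.comp_def, ContinuousLinearMap.apply_apply] using
      (ContinuousLinearMap.apply 𝕜 X x).lipschitz.isBounded_image hT
  have ha_ui : CesaroUniformIntegrable a :=
    cesaroUniformIntegrable_of_average_norm_mul_le hφ_nonneg hφ_top hC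
  exact tendsto_zero_iff_norm_tendsto_zero.1 (ha_ui.tendsto_average_smul horbit_bdd
    (uniformlyWeakCesaroNull_orbit hT hm))

end Normed

/-- Let `T` be a weakly almost periodic operator on a Banach space `X` (i.e.
every orbit `{T^n x}` is relatively compact in the weak topology), and let `(a_k)` be a sequence
of scalars satisfying `sup_n (1/n) ∑_{k=1}^n |a_k| φ(|a_k|) < ∞` for some strictly increasing
`φ : ℝ⁺ → ℝ⁺` with `φ(x) → ∞`. Then for every flight vector `x` of `T` (i.e. `T^{n_j} x → 0`
weakly along some strictly increasing sequence `(n_j)`),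
`lim_n ‖(1/n) ∑_{k=1}^n a_k T^k x‖ = 0`. -/
theorem stmt1 {𝕜 : Type*} [RCLike 𝕜] {X : Type*} [NormedAddCommGroup X] [NormedSpace 𝕜 X]
    [CompleteSpace X] (T : X →L[𝕜] X)
    (hWAP : ∀ x : X,
      IsCompact (closure (Set.range fun n : ℕ => toWeakSpace 𝕜 X ((T ^ n) x))))
    (a : ℕ → 𝕜) (φ : ℝ → ℝ) (hφ_pos : ∀ t, 0 ≤ t → 0 ≤ φ t)
    (hφ_mono : StrictMonoOn φ (Set.Ici (0 : ℝ)))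
    (hφ_top : Tendsto φ atTop atTop)
    (ha : ∃ s : ℝ, ∀ n : ℕ, (n : ℝ)⁻¹ * ∑ k ∈ Icc 1 n, ‖a k‖ * φ ‖a k‖ ≤ s)
    (x : X)
    (hx_flight : ∃ n : ℕ → ℕ, StrictMono n ∧
      ∀ f : X →L[𝕜] 𝕜, Tendsto (fun j : ℕ => f ((T ^ n j) x)) atTop (nhds 0)) :
    Tendsto (fun n : ℕ => ‖(n : 𝕜)⁻¹ • ∑ k ∈ Icc 1 n, a k • (T ^ k) x‖) atTop (nhds 0) :=
  stmt1_general T (isBounded_range_pow_of_isCompact_closure_orbit hWAP) a φ hφ_pos hφ_top ha x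
    (hx_flight.imp fun _ ↦ And.right)
end

section
/- Let (a_k)_{k≥1} be a Hartman sequence satisfying sup_n (1/n)∑_{k=1}^n |a_k| φ(|a_k|) < ∞ for some strictly increasing function φ: ℝ⁺ → ℝ⁺ with φ(x) → ∞. Then for every weakly almost periodic linear operator T on a complex Banach space X and every x ∈ X, the sequence (1/n)∑_{k=1}^n a_k T^k x converges in norm. -/
open Filter Finset

/-!
Split `x = r + (x - r)`, where `r` is a limit of combinations of eigenvectors of `T` with unimodular
eigenvalues, and `x - r` is a flight vector: `(1/n) ∑_{k=1}^n |b (T ^ k (x - r))| → 0` uniformly for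
`b` in the dual unit ball. The Hartman property gives the convergence on each eigenvector, hence at
`r`, because the weighted means are uniformly bounded. The growth condition makes `a` a limit of
bounded sequences in the Cesàro seminorm, and bounded weights send the means of a flight vector
to `0`.

To find `r`, extend `n ↦ T ^ n x` to a weakly continuous map `Φ` on `βℕ`, and let `μ` be a weak
limit of the empirical measures of `1, 2, 3, …`; it is invariant under the shift. For a functional
`b`, the Koopman orbit of `b ∘ Φ` in `L²(μ)` is relatively compact, because `b ↦ b ∘ Φ` is a compact
operator. If `b` kills the unimodular eigenvectors, then `b ∘ Φ` is orthogonal to all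
eigenfunctions: integrating `Φ` against an eigenfunction gives an eigenvector of `T`. A vector with
relatively compact orbit under an isometry of a Hilbert space and orthogonal to its eigenvectors
vanishes (a limit of the means of the rank-one operators along the orbit is compact, self-adjoint
and commutes with the isometry), so `b ∘ Φ = 0` almost everywhere. The support of `μ` contains an
idempotent ultrafilter `p`; put `r = Φ p`. For every functional `c`, idempotency provides a `b`
killing the unimodular eigenvectors with `c (T ^ k (x - r)) = b (T ^ k x)`, so the means of
`|c (T ^ k (x - r))|` tend to `∫ |b ∘ Φ| ∂μ = 0` along an ultrafilter. Splitting orbits in the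
weak dual into blocks of bounded length with small mean makes this uniform and independent of the
ultrafilter.
-/

open MeasureTheory InnerProductSpace
open scoped Topology ENNReal

section CesaroMean

variable (𝕜 : Type*) [RCLike 𝕜]
variable {E F : Type*} [NormedAddCommGroup E] [NormedSpace 𝕜 E] [NormedAddCommGroup F]
  [NormedSpace 𝕜 F]

/-- The Cesàro mean `(u 1 + ⋯ + u n) / n` as a linear functional of the sequence `u`; the term
`u 0` does not enter, and the mean for `n = 0` is `0`. -/
def cesaroMean (n : ℕ) : (ℕ → E) →ₗ[𝕜] E :=
  (n : 𝕜)⁻¹ • ∑ k ∈ Icc 1 n, LinearMap.proj k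

lemma cesaroMean_apply (n : ℕ) (u : ℕ → E) :
    cesaroMean 𝕜 n u = (n : 𝕜)⁻¹ • ∑ k ∈ Icc 1 n, u k := by
  simp [cesaroMean]

lemma map_cesaroMean (L : E →ₗ[𝕜] F) (n : ℕ) (u : ℕ → E) :
    L (cesaroMean 𝕜 n u) = cesaroMean 𝕜 n (fun k ↦ L (u k)) := by
  simp [cesaroMean_apply]

lemma cesaroMean_const {n : ℕ} (hn : n ≠ 0) (c : E) : cesaroMean 𝕜 n (fun _ ↦ c) = c := by
  have hn' : (n : 𝕜) ≠ 0 := Nat.cast_ne_zero.mpr hn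
  rw [cesaroMean_apply, sum_const, Nat.card_Icc, Nat.add_sub_cancel, ← Nat.cast_smul_eq_nsmul 𝕜,
    inv_smul_smul₀ hn']

lemma tendsto_cesaroMean_const (c : E) :
    Tendsto (fun n ↦ cesaroMean 𝕜 n (fun _ ↦ c)) atTop (𝓝 c) :=
  tendsto_const_nhds.congr' <| (eventually_ne_atTop 0).mono fun _ hn ↦
    (cesaroMean_const 𝕜 hn c).symm

lemma cesaroMean_mono {u v : ℕ → ℝ} (huv : ∀ k, u k ≤ v k) (n : ℕ) :
    cesaroMean ℝ n u ≤ cesaroMean ℝ n v := by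
  simp only [cesaroMean_apply]
  gcongr with k
  exact huv k

lemma norm_cesaroMean_le (n : ℕ) (u : ℕ → E) :
    ‖cesaroMean 𝕜 n u‖ ≤ cesaroMean ℝ n (fun k ↦ ‖u k‖) := by
  simp only [cesaroMean_apply, norm_smul, norm_inv, RCLike.norm_natCast, smul_eq_mul]
  gcongr
  exact norm_sum_le _ _

lemma cesaroMean_le_of_le {u : ℕ → ℝ} {M : ℝ} (hM : 0 ≤ M) (hu : ∀ k, u k ≤ M) (n : ℕ) :
    cesaroMean ℝ n u ≤ M := by
  obtain rfl | hn := eq_or_ne n 0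
  · simpa [cesaroMean_apply] using hM
  · exact (cesaroMean_mono hu n).trans_eq (cesaroMean_const ℝ hn M)

lemma norm_cesaroMean_le_of_norm_le {u : ℕ → E} {M : ℝ} (hu : ∀ k, ‖u k‖ ≤ M) (n : ℕ) :
    ‖cesaroMean 𝕜 n u‖ ≤ M :=
  (norm_cesaroMean_le 𝕜 n u).trans (cesaroMean_le_of_le ((norm_nonneg _).trans (hu 0)) hu n)

lemma cesaroMean_mem_convexHull [NormedSpace ℝ E] {n : ℕ} (hn : n ≠ 0) (u : ℕ → E) :
    cesaroMean 𝕜 n u ∈ convexHull ℝ (Set.range u) := by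
  have hmem := (Icc 1 n).centerMass_mem_convexHull (w := fun _ ↦ (1 : ℝ)) (z := u)
    (s := Set.range u) (fun _ _ ↦ zero_le_one) (by simpa using Nat.pos_of_ne_zero hn)
    (fun k _ ↦ Set.mem_range_self k)
  simpa [Finset.centerMass, cesaroMean_apply, inv_natCast_smul_eq 𝕜 ℝ] using hmem

lemma cesaroMean_succ_sub (u : ℕ → E) (n : ℕ) :
    cesaroMean 𝕜 n (fun k ↦ u (k + 1)) - cesaroMean 𝕜 n u =
      (n : 𝕜)⁻¹ • (u (n + 1) - u 1) := by
  rw [cesaroMean_apply, cesaroMean_apply, ← smul_sub, ← sum_sub_distrib]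
  congr 1
  induction n with
  | zero => simp
  | succ n ih => rw [sum_Icc_succ_top (by lia), ih]; abel

lemma tendsto_cesaroMean_succ_sub {u : ℕ → E} {M : ℝ} (hu : ∀ k, ‖u k‖ ≤ M) :
    Tendsto (fun n ↦ cesaroMean 𝕜 n (fun k ↦ u (k + 1)) - cesaroMean 𝕜 n u) atTop (𝓝 0) := by
  simp only [cesaroMean_succ_sub]
  refine (tendsto_inv_atTop_nhds_zero_nat (𝕜 := 𝕜)).zero_smul_isBoundedUnder_le ?_
  exact isBoundedUnder_of ⟨M + M, fun n ↦ (norm_sub_le _ _).trans (add_le_add (hu _) (hu _))⟩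

end CesaroMean

lemma exists_tendsto_cesaroMean_of_totallyBounded (𝕜 : Type*) [RCLike 𝕜] {E : Type*}
    [NormedAddCommGroup E] [NormedSpace 𝕜 E] [NormedSpace ℝ E] [CompleteSpace E] {u : ℕ → E}
    (hu : TotallyBounded (Set.range u)) {U : Ultrafilter ℕ} (hU : (U : Filter ℕ) ≤ atTop) :
    ∃ q ∈ closedConvexHull ℝ (Set.range u), Tendsto (cesaroMean 𝕜 · u) U (𝓝 q) := by
  rw [closedConvexHull_eq_closure_convexHull]
  have hcompact : IsCompact (closure (convexHull ℝ (Set.range u))) :=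
    hu.convexHull.closure.isCompact_of_isClosed isClosed_closure
  refine hcompact.ultrafilter_le_nhds (U.map (cesaroMean 𝕜 · u)) (le_principal_iff.mpr ?_)
  exact hU <| (eventually_ne_atTop 0).mono fun n hn ↦
    subset_closure (cesaroMean_mem_convexHull 𝕜 hn u)

section RankOne

variable {𝕜 : Type*} [RCLike 𝕜] {H : Type*} [NormedAddCommGroup H] [InnerProductSpace 𝕜 H]

lemma isCompactOperator_rankOne (v w : H) : IsCompactOperator (rankOne 𝕜 v w) :=
  (isCompactOperator_of_locallyCompactSpace_rng
    (ContinuousLinearMap.toSpanSingleton 𝕜 v)).comp_clm (innerSL 𝕜 w)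

lemma half_sq_le_norm_inner {r : ℝ} (hr : 0 < r) {v w : H} (hv : r ≤ ‖v‖)
    (hvw : ‖v - w‖ ≤ r / 2) : r ^ 2 / 2 ≤ ‖⟪v, w⟫_𝕜‖ := by
  have hsplit : ‖v‖ ^ 2 ≤ ‖⟪v, v - w⟫_𝕜‖ + ‖⟪v, w⟫_𝕜‖ := by
    calc ‖v‖ ^ 2 = ‖⟪v, v⟫_𝕜‖ := by simp
      _ = ‖⟪v, v - w⟫_𝕜 + ⟪v, w⟫_𝕜‖ := by rw [← inner_add_right, sub_add_cancel]
      _ ≤ _ := norm_add_le _ _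
  have hcauchy_schwarz : ‖⟪v, v - w⟫_𝕜‖ ≤ ‖v‖ * (r / 2) :=
    (norm_inner_le_norm _ _).trans (by gcongr)
  nlinarith

lemma commute_of_tendsto_cesaroMean {V : H →ₗᵢ[𝕜] H} {u : ℕ → H} (hu : ∀ k, u (k + 1) = V (u k))
    {l : Filter ℕ} [l.NeBot] (hl : l ≤ atTop) {Q : H →L[𝕜] H}
    (hQ : Tendsto (cesaroMean 𝕜 · fun k ↦ rankOne 𝕜 (u k) (u k)) l (𝓝 Q)) :
    Commute V.toContinuousLinearMap Q := by
  set R : ℕ → H →L[𝕜] H := fun k ↦ rankOne 𝕜 (u k) (u k)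
  set V' := V.toContinuousLinearMap
  have hnorm (k : ℕ) : ‖u k‖ = ‖u 0‖ := by
    induction k with
    | zero => rfl
    | succ k ih => rw [hu, V.norm_map, ih]
  have hRnorm (k : ℕ) : ‖R k‖ ≤ ‖u 0‖ * ‖u 0‖ := by simp [R, hnorm]
  have hR (k : ℕ) : R (k + 1) * V' = V' * R k := by
    ext z
    simp [R, V', hu]
  have hshift : Tendsto (cesaroMean 𝕜 · fun k ↦ R (k + 1)) l (𝓝 Q) := by
    simpa using ((tendsto_cesaroMean_succ_sub 𝕜 hRnorm).mono_left hl).add hQ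
  have hmean (n : ℕ) :
      cesaroMean 𝕜 n (fun k ↦ R (k + 1)) * V' = V' * cesaroMean 𝕜 n R := by
    have hl := map_cesaroMean 𝕜 (LinearMap.mulLeft 𝕜 V') n R
    have hr := map_cesaroMean 𝕜 (LinearMap.mulRight 𝕜 V') n (fun k ↦ R (k + 1))
    simp only [LinearMap.mulLeft_apply, LinearMap.mulRight_apply] at hl hr
    simp only [hl, hr, hR]
  refine tendsto_nhds_unique (hQ.const_mul V') ?_
  simpa only [hmean] using hshift.mul_const V'

variable [CompleteSpace H]

lemma totallyBounded_range_rankOne_self {ι : Type*} {u : ι → H}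
    (hu : TotallyBounded (Set.range u)) :
    TotallyBounded (Set.range fun k ↦ rankOne 𝕜 (u k) (u k)) := by
  have hcompact : IsCompact (closure (Set.range u)) :=
    hu.closure.isCompact_of_isClosed isClosed_closure
  have hcont : Continuous fun v : H ↦ rankOne 𝕜 v v := by
    simp only [rankOne_def]
    fun_prop
  refine (hcompact.image hcont).totallyBounded.subset ?_
  rintro _ ⟨k, rfl⟩
  exact ⟨u k, subset_closure ⟨k, rfl⟩, rfl⟩

end RankOne

section Hilbert

variable {H : Type*} [NormedAddCommGroup H] [InnerProductSpace ℂ H]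

lemma apply_eq_zero_of_mem_closedConvexHull_rankOne_self
    {ι : Type*} {u : ι → H} {Q : H →L[ℂ] H}
    (hQ : Q ∈ closedConvexHull ℝ (Set.range fun k ↦ rankOne ℂ (u k) (u k))) {v : H}
    (hv : ∀ k, ⟪u k, v⟫_ℂ = 0) : Q v = 0 :=
  closedConvexHull_min (t := {A : H →L[ℂ] H | A v = 0})
    (Set.range_subset_iff.mpr fun k ↦ by simp [hv k])
    ((ContinuousLinearMap.apply ℂ H v).ker.restrictScalars ℝ).convex
    (isClosed_eq (ContinuousLinearMap.apply ℂ H v).continuous continuous_const) hQ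

variable [CompleteSpace H]

lemma exists_common_eigenvector {Q V : H →L[ℂ] H} (hQc : IsCompactOperator Q)
    (hQs : Q.IsSymmetric) (hQ : Q ≠ 0) (hVQ : Commute V Q) :
    ∃ (m l : ℂ) (v : H), m ≠ 0 ∧ v ≠ 0 ∧ Q v = m • v ∧ V v = l • v := by
  obtain ⟨m, hm, hm0⟩ : ∃ m, Module.End.HasEigenvalue (Q : Module.End ℂ H) m ∧ m ≠ 0 := by
    by_contra! h
    exact hQ ((ContinuousLinearMap.eq_zero_of_forall_hasEigenvalue_eq_zero hQc hQs).mp h)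
  set eig := Module.End.eigenspace (Q : Module.End ℂ H) m
  have : FiniteDimensional ℂ eig := ContinuousLinearMap.finite_dimensional_eigenspace hQc m hm0
  have : Nontrivial eig := Submodule.nontrivial_iff_ne_bot.mpr hm
  have hmaps : ∀ z ∈ eig, (V : Module.End ℂ H) z ∈ eig := by
    intro z hz
    rw [Module.End.mem_eigenspace_iff] at hz ⊢
    calc Q (V z) = V (Q z) := (DFunLike.congr_fun hVQ.eq z).symm
      _ = m • V z := (congrArg V hz).trans (map_smul V m z)
  obtain ⟨l, hl⟩ := Module.End.exists_eigenvalue ((V : Module.End ℂ H).restrict hmaps)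
  obtain ⟨v, hv, hv0⟩ := hl.exists_hasEigenvector
  exact ⟨m, l, v, hm0, by simpa using hv0, Module.End.mem_eigenspace_iff.mp v.2,
    congrArg Subtype.val (Module.End.mem_eigenspace_iff.mp hv)⟩

lemma ne_zero_of_mem_closedConvexHull_rankOne_self {ι : Type*} {u : ι → H}
    (hu : TotallyBounded (Set.range u)) {r : ℝ} (hr : 0 < r) (hur : ∀ k, r ≤ ‖u k‖)
    {Q : H →L[ℂ] H} (hQ : Q ∈ closedConvexHull ℝ (Set.range fun k ↦ rankOne ℂ (u k) (u k))) :
    Q ≠ 0 := by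
  obtain ⟨t, htf, ht⟩ := Metric.totallyBounded_iff.mp hu (r / 2) (by positivity)
  lift t to Finset H using htf
  -- Each orbit point is close to some `w ∈ t`, which bounds the quadratic form below at `w`.
  let form : (H →L[ℂ] H) → ℝ := fun A ↦ ∑ w ∈ t, (⟪w, A w⟫_ℂ).re
  have hform_rankOne (k : ι) : (r ^ 2 / 2) ^ 2 ≤ form (rankOne ℂ (u k) (u k)) := by
    obtain ⟨w, hwt, hw⟩ := Set.mem_iUnion₂.mp (ht ⟨k, rfl⟩)
    have hterm (v : H) : (⟪v, rankOne ℂ (u k) (u k) v⟫_ℂ).re = ‖⟪u k, v⟫_ℂ‖ ^ 2 := by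
      rw [rankOne_apply, inner_smul_right, ← inner_conj_symm v, Complex.mul_conj,
        Complex.ofReal_re, Complex.normSq_eq_norm_sq]
    have hinner : r ^ 2 / 2 ≤ ‖⟪u k, w⟫_ℂ‖ :=
      half_sq_le_norm_inner hr (hur k) (mem_ball_iff_norm.mp hw).le
    calc (r ^ 2 / 2) ^ 2 ≤ ‖⟪u k, w⟫_ℂ‖ ^ 2 := by gcongr
      _ ≤ form (rankOne ℂ (u k) (u k)) := by
        simp only [form, hterm]
        exact single_le_sum (f := fun v ↦ ‖⟪u k, v⟫_ℂ‖ ^ 2) (fun _ _ ↦ by positivity) hwt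
  have hform_cont : Continuous form := by fun_prop
  have hform_lin : IsLinearMap ℝ form :=
    ⟨fun A B ↦ by simp [form, sum_add_distrib],
      fun c A ↦ by simp [form, inner_smul_right_eq_smul, mul_sum]⟩
  have hlower : (r ^ 2 / 2) ^ 2 ≤ form Q :=
    closedConvexHull_min (t := {A | (r ^ 2 / 2) ^ 2 ≤ form A})
      (Set.range_subset_iff.mpr hform_rankOne) (convex_halfSpace_ge hform_lin _)
      (isClosed_le continuous_const hform_cont) hQ
  rintro rfl
  have : 0 < (r ^ 2 / 2) ^ 2 := by positivity
  simp only [form, zero_apply, inner_zero_right, Complex.zero_re,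
    sum_const_zero] at hlower
  linarith

section RankOneHull

variable {ι : Type*} {u : ι → H} {Q : H →L[ℂ] H}

lemma isCompactOperator_of_mem_closedConvexHull_rankOne_self
    (hQ : Q ∈ closedConvexHull ℝ (Set.range fun k ↦ rankOne ℂ (u k) (u k))) :
    IsCompactOperator Q :=
  closedConvexHull_min (t := {A : H →L[ℂ] H | IsCompactOperator A})
    (Set.range_subset_iff.mpr fun k ↦ isCompactOperator_rankOne (u k) (u k))
    ((compactOperator (RingHom.id ℂ) H H).restrictScalars ℝ).convex
    isClosed_setOfPred_isCompactOperator hQ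

lemma isSymmetric_of_mem_closedConvexHull_rankOne_self
    (hQ : Q ∈ closedConvexHull ℝ (Set.range fun k ↦ rankOne ℂ (u k) (u k))) :
    Q.IsSymmetric :=
  ContinuousLinearMap.isSelfAdjoint_iff_isSymmetric.mp <|
    closedConvexHull_min (t := {A : H →L[ℂ] H | star A = A})
      (Set.range_subset_iff.mpr fun k ↦
        ContinuousLinearMap.isSelfAdjoint_iff_isSymmetric.mpr (isSymmetric_rankOne_self (u k)))
      (selfAdjoint.submodule ℝ (H →L[ℂ] H)).convex
      (isClosed_eq continuous_star continuous_id) hQ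

end RankOneHull

theorem eq_zero_of_forall_eigenvector_inner_eq_zero (V : H →ₗᵢ[ℂ] H) {h : H}
    (htb : TotallyBounded (Set.range fun k : ℕ ↦ V^[k] h))
    (horth : ∀ (l : ℂ) (g : H), ‖l‖ = 1 → V g = l • g → ⟪g, h⟫_ℂ = 0) : h = 0 := by
  by_contra hh
  set u : ℕ → H := fun k ↦ V^[k] h
  have hu (k : ℕ) : u (k + 1) = V (u k) := Function.iterate_succ_apply' V k h
  have hnorm (k : ℕ) : ‖h‖ ≤ ‖u k‖ := by
    induction k with
    | zero => rfl
    | succ k ih => rwa [hu, V.norm_map]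
  obtain ⟨Q, hQmem, hQ⟩ := exists_tendsto_cesaroMean_of_totallyBounded ℂ
    (totallyBounded_range_rankOne_self (𝕜 := ℂ) htb) Nat.hyperfilter_le_atTop
  have hQ0 := ne_zero_of_mem_closedConvexHull_rankOne_self htb (norm_pos_iff.mpr hh) hnorm hQmem
  obtain ⟨m, l, v, hm, hv0, hQv, hVv⟩ := exists_common_eigenvector
    (isCompactOperator_of_mem_closedConvexHull_rankOne_self hQmem)
    (isSymmetric_of_mem_closedConvexHull_rankOne_self hQmem) hQ0
    (commute_of_tendsto_cesaroMean hu Nat.hyperfilter_le_atTop hQ)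
  have hVv : V v = l • v := hVv
  have hl : ‖l‖ = 1 := by
    have : ‖v‖ = ‖l‖ * ‖v‖ := by rw [← norm_smul, ← hVv, V.norm_map]
    simpa [hv0] using this
  have hl0 : l ≠ 0 := norm_ne_zero_iff.mp (by simp [hl])
  have hvu (k : ℕ) : ⟪u k, v⟫_ℂ = 0 := by
    induction k with
    | zero => exact inner_eq_zero_symm.mp (horth l v hl hVv)
    | succ k ih =>
      have : l * ⟪u (k + 1), v⟫_ℂ = 0 := by
        rw [← inner_smul_right, ← hVv, hu, V.inner_map_map, ih]
      exact (mul_eq_zero.mp this).resolve_left hl0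
  exact smul_ne_zero hm hv0 (hQv.symm.trans <|
    apply_eq_zero_of_mem_closedConvexHull_rankOne_self hQmem hvu)

end Hilbert

section DualCompLp

variable {𝕜 : Type*} [RCLike 𝕜] {X : Type*} [NormedAddCommGroup X] [NormedSpace 𝕜 X]
  {Ω : Type*} [MeasurableSpace Ω] {μ : Measure Ω} {p : ℝ≥0∞} [Fact (1 ≤ p)]

variable (𝕜) in
/-- The operator `b ↦ b ∘ f` from the dual of `X` to `Lp 𝕜 p μ`, for `f : Lp X p μ`, as a
continuous linear function of `f`. -/
noncomputable def dualCompLp : Lp X p μ →L[𝕜] StrongDual 𝕜 X →L[𝕜] Lp 𝕜 p μ :=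
  (ContinuousLinearMap.compLpL₂ p μ (.id 𝕜 (StrongDual 𝕜 X))).flip

lemma dualCompLp_apply (f : Lp X p μ) (b : StrongDual 𝕜 X) : dualCompLp 𝕜 f b = b.compLp f :=
  rfl

lemma isCompactOperator_dualCompLp_indicatorConstLp (c : X) {s : Set Ω}
    (hs : MeasurableSet s) (hμs : μ s ≠ ∞) :
    IsCompactOperator (dualCompLp 𝕜 (indicatorConstLp p hs hμs c)) := by
  have hrank : dualCompLp 𝕜 (indicatorConstLp p hs hμs c) =
      (ContinuousLinearMap.toSpanSingleton 𝕜 (indicatorConstLp p hs hμs (1 : 𝕜))).comp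
        (ContinuousLinearMap.apply 𝕜 𝕜 c) := by
    ext1 b
    refine Lp.ext ?_
    filter_upwards [b.coeFn_compLp (indicatorConstLp p hs hμs c),
      indicatorConstLp_coeFn (p := p) (hs := hs) (hμs := hμs) (c := c),
      indicatorConstLp_coeFn (p := p) (hs := hs) (hμs := hμs) (c := (1 : 𝕜)),
      Lp.coeFn_smul (b c) (indicatorConstLp p hs hμs (1 : 𝕜))] with ω hcomp hc hone hsmul
    simp only [dualCompLp_apply, ContinuousLinearMap.comp_apply, ContinuousLinearMap.apply_apply,
      ContinuousLinearMap.toSpanSingleton_apply, hcomp, hsmul, hc, hone, Pi.smul_apply]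
    by_cases hω : ω ∈ s <;> simp [hω]
  rw [hrank]
  exact (isCompactOperator_of_locallyCompactSpace_rng
    (ContinuousLinearMap.toSpanSingleton 𝕜 (indicatorConstLp p hs hμs (1 : 𝕜)))).comp_clm
    (ContinuousLinearMap.apply 𝕜 𝕜 c)

lemma isCompactOperator_dualCompLp (hp : p ≠ ∞) (f : Lp X p μ) :
    IsCompactOperator (dualCompLp 𝕜 f) := by
  induction f using Lp.induction hp with
  | indicatorConst c hs hμs => exact isCompactOperator_dualCompLp_indicatorConstLp c hs hμs.ne
  | add hf hg _ ihf ihg =>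
    rw [map_add]
    exact ihf.add ihg
  | isClosed =>
    exact isClosed_setOfPred_isCompactOperator.preimage (dualCompLp 𝕜).continuous

end DualCompLp

section UnimodularEigenspan

variable {𝕜 : Type*} [RCLike 𝕜] {X : Type*} [NormedAddCommGroup X] [NormedSpace 𝕜 X]

/-- The linear span of the eigenvectors of `T` with eigenvalue of modulus one. -/
def unimodularEigenspan (T : X →L[𝕜] X) : Submodule 𝕜 X :=
  Submodule.span 𝕜 {z | ∃ l : 𝕜, ‖l‖ = 1 ∧ T z = l • z}

end UnimodularEigenspan

section Koopman

variable {X : Type*} [NormedAddCommGroup X] [NormedSpace ℂ X]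
  {Ω : Type*} [MeasurableSpace Ω] {μ : Measure Ω}

lemma integrable_conj_smul (g : Lp ℂ 2 μ) (f : Lp X 2 μ) :
    Integrable (fun ω ↦ (starRingEnd ℂ) (g ω) • f ω) μ := by
  rw [← memLp_one_iff_integrable]
  exact (Lp.memLp f).smul (Lp.memLp g).star

lemma apply_integral_conj_smul [CompleteSpace X] (g : Lp ℂ 2 μ) (f : Lp X 2 μ)
    (b : StrongDual ℂ X) :
    b (∫ ω, (starRingEnd ℂ) (g ω) • f ω ∂μ) = ⟪g, dualCompLp ℂ f b⟫_ℂ := by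
  rw [← b.integral_comp_comm (integrable_conj_smul g f), L2.inner_def]
  refine integral_congr_ae ?_
  filter_upwards [b.coeFn_compLp f] with ω hω
  simp [dualCompLp_apply, hω, mul_comm]

variable {σ : Ω → Ω} (hσ : MeasurePreserving σ μ μ) {T : X →L[ℂ] X}

lemma map_integral_conj_smul_of_eigenfunction [CompleteSpace X] {f : Lp X 2 μ}
    (hf : Lp.compMeasurePreserving σ hσ f = T.compLp f) {g : Lp ℂ 2 μ} {l : ℂ} (hl : ‖l‖ = 1)
    (hg : Lp.compMeasurePreserving σ hσ g = l • g) :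
    T (∫ ω, (starRingEnd ℂ) (g ω) • f ω ∂μ) = l • ∫ ω, (starRingEnd ℂ) (g ω) • f ω ∂μ := by
  have hint := integrable_conj_smul g f
  have hfσ : f ∘ σ =ᵐ[μ] fun ω ↦ T (f ω) :=
    (Lp.coeFn_compMeasurePreserving f hσ).symm.trans (hf ▸ T.coeFn_compLp f)
  have hgσ : g ∘ σ =ᵐ[μ] fun ω ↦ l * g ω :=
    (Lp.coeFn_compMeasurePreserving g hσ).symm.trans (hg ▸ Lp.coeFn_smul l g)
  have hll : l * (starRingEnd ℂ) l = 1 := by simp [Complex.mul_conj, Complex.normSq_eq_norm_sq, hl]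
  calc T (∫ ω, (starRingEnd ℂ) (g ω) • f ω ∂μ)
      = ∫ ω, (starRingEnd ℂ) (g ω) • T (f ω) ∂μ := by
        simp only [← T.integral_comp_comm hint, map_smul]
    _ = ∫ ω, l • (starRingEnd ℂ) (g (σ ω)) • f (σ ω) ∂μ := by
        refine integral_congr_ae ?_
        filter_upwards [hfσ, hgσ] with ω hfω hgω
        simp only [Function.comp_apply] at hfω hgω
        rw [hfω, hgω, map_mul, smul_smul, ← mul_assoc, hll, one_mul]
    _ = l • ∫ ω, (starRingEnd ℂ) (g ω) • f ω ∂μ := by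
        rw [integral_smul]
        congr 1
        rw [← integral_map (φ := σ) (f := fun ω ↦ (starRingEnd ℂ) (g ω) • f ω) hσ.aemeasurable
          (hσ.map_eq.symm ▸ hint.aestronglyMeasurable), hσ.map_eq]

lemma compMeasurePreserving_dualCompLp {f : Lp X 2 μ}
    (hf : Lp.compMeasurePreserving σ hσ f = T.compLp f) (b : StrongDual ℂ X) :
    Lp.compMeasurePreserving σ hσ (dualCompLp ℂ f b) = dualCompLp ℂ f (b.comp T) := by
  have hfσ : f ∘ σ =ᵐ[μ] fun ω ↦ T (f ω) :=
    (Lp.coeFn_compMeasurePreserving f hσ).symm.trans (hf ▸ T.coeFn_compLp f)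
  refine Lp.ext ?_
  filter_upwards [Lp.coeFn_compMeasurePreserving (dualCompLp ℂ f b) hσ,
    hσ.quasiMeasurePreserving.ae (b.coeFn_compLp f), (b.comp T).coeFn_compLp f, hfσ]
    with ω hcomp hb hbT hfω
  simp only [dualCompLp_apply, Function.comp_apply, ContinuousLinearMap.comp_apply] at *
  rw [hcomp, hb, hbT, hfω]

lemma iterate_compMeasurePreserving_dualCompLp {f : Lp X 2 μ}
    (hf : Lp.compMeasurePreserving σ hσ f = T.compLp f) (b : StrongDual ℂ X) (k : ℕ) :
    (Lp.compMeasurePreservingₗᵢ ℂ σ hσ)^[k] (dualCompLp ℂ f b) =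
      dualCompLp ℂ f (b.comp (T ^ k)) := by
  induction k with
  | zero => rfl
  | succ k ih =>
    rw [Function.iterate_succ_apply', ih, pow_succ]
    exact compMeasurePreserving_dualCompLp hσ hf _

theorem dualCompLp_eq_zero_of_unimodularEigenspan_le_ker [CompleteSpace X] {C : ℝ}
    (hT : ∀ k : ℕ, ‖T ^ k‖ ≤ C) {f : Lp X 2 μ}
    (hf : Lp.compMeasurePreserving σ hσ f = T.compLp f) {b : StrongDual ℂ X}
    (hb : unimodularEigenspan T ≤ b.ker) : dualCompLp ℂ f b = 0 := by
  refine eq_zero_of_forall_eigenvector_inner_eq_zero (Lp.compMeasurePreservingₗᵢ ℂ σ hσ) ?_ ?_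
  · have hcompact := (isCompactOperator_dualCompLp (𝕜 := ℂ)
      ENNReal.ofNat_ne_top f).isCompact_closure_image_closedBall (‖b‖ * C)
    refine hcompact.totallyBounded.subset ?_
    rintro _ ⟨k, rfl⟩
    refine subset_closure ⟨b.comp (T ^ k), ?_,
      (iterate_compMeasurePreserving_dualCompLp hσ hf b k).symm⟩
    rw [mem_closedBall_zero_iff]
    exact (b.opNorm_comp_le _).trans (by gcongr; exact hT k)
  · intro l g hl hg
    rw [← apply_integral_conj_smul]
    exact hb (Submodule.subset_span
      ⟨l, hl, map_integral_conj_smul_of_eigenfunction hσ hf hl hg⟩)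

end Koopman

section EmpiricalLimit

lemma exists_tendsto_ultrafilter_of_norm_le {ι E : Type*} [NormedAddCommGroup E] [ProperSpace E]
    (U : Ultrafilter ι) {s : ι → E} {M : ℝ} (hs : ∀ i, ‖s i‖ ≤ M) : ∃ c, Tendsto s U (𝓝 c) := by
  obtain ⟨c, -, hc⟩ := (isCompact_closedBall (0 : E) M).ultrafilter_le_nhds (U.map s) <|
    le_principal_iff.mpr <| mem_map.mpr <| univ_mem' fun i ↦ mem_closedBall_zero_iff.mpr (hs i)
  exact ⟨c, hc⟩

lemma exists_norm_comp_le {K E : Type*} [TopologicalSpace K] [CompactSpace K]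
    [SeminormedAddCommGroup E] {h : K → E} (hh : Continuous h) (u : ℕ → K) :
    ∃ M, ∀ k, ‖(h ∘ u) k‖ ≤ M := by
  obtain ⟨M, hM⟩ := isCompact_univ.exists_bound_of_continuousOn hh.continuousOn
  exact ⟨M, fun k ↦ hM _ (Set.mem_univ _)⟩

variable {K : Type*} [TopologicalSpace K] [MeasurableSpace K]

/-- `μ` is the weak limit along `U` of the empirical measures `(δ_{u 1} + ⋯ + δ_{u n}) / n`. -/
def IsEmpiricalLimit (U : Ultrafilter ℕ) (u : ℕ → K) (μ : Measure K) : Prop :=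
  ∀ h : K → ℝ, Continuous h → Tendsto (fun n ↦ cesaroMean ℝ n (h ∘ u)) U (𝓝 (∫ w, h w ∂μ))

variable [CompactSpace K] [T2Space K] [BorelSpace K] {U : Ultrafilter ℕ} {u : ℕ → K}

lemma exists_measure_isEmpiricalLimit (hU : (U : Filter ℕ) ≤ atTop) (u : ℕ → K) :
    ∃ μ : Measure K, μ.Regular ∧ IsProbabilityMeasure μ ∧ IsEmpiricalLimit U u μ := by
  have hlim (h : CompactlySupportedContinuousMap K ℝ) :
      ∃ c, Tendsto (fun n ↦ cesaroMean ℝ n (h ∘ u)) U (𝓝 c) := by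
    obtain ⟨M, hM⟩ := exists_norm_comp_le h.continuous u
    exact exists_tendsto_ultrafilter_of_norm_le U fun n ↦ norm_cesaroMean_le_of_norm_le ℝ hM n
  choose L hL using hlim
  let Λ : CompactlySupportedContinuousMap K ℝ →ₚ[ℝ] ℝ := PositiveLinearMap.mk₀
    { toFun := L
      map_add' := fun f g ↦ tendsto_nhds_unique (hL (f + g)) <|
        ((hL f).add (hL g)).congr fun n ↦ ((cesaroMean ℝ n).map_add _ _).symm
      map_smul' := fun c f ↦ tendsto_nhds_unique (hL (c • f)) <|
        ((hL f).const_smul c).congr fun n ↦ ((cesaroMean ℝ n).map_smul _ _).symm }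
    fun f hf ↦ ge_of_tendsto' (hL f) fun n ↦
      (map_zero (cesaroMean ℝ n)).symm.trans_le (cesaroMean_mono (fun k ↦ hf (u k)) n)
  have hΛ : IsEmpiricalLimit U u (RealRMK.rieszMeasure Λ) := by
    intro h hh
    let h' : CompactlySupportedContinuousMap K ℝ := ⟨⟨h, hh⟩, .of_compactSpace _⟩
    exact (RealRMK.integral_rieszMeasure Λ h').symm ▸ hL h'
  refine ⟨RealRMK.rieszMeasure Λ, inferInstance, ⟨?_⟩, hΛ⟩
  have hone := tendsto_nhds_unique (hΛ (fun _ ↦ 1) continuous_const)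
    ((tendsto_cesaroMean_const ℝ (1 : ℝ)).mono_left hU)
  rw [integral_const, smul_eq_mul, mul_one] at hone
  exact (ENNReal.toReal_eq_one_iff _).mp hone

lemma IsEmpiricalLimit.measurePreserving {μ : Measure K} [IsFiniteMeasure μ] [μ.Regular]
    (hμ : IsEmpiricalLimit U u μ) (hU : (U : Filter ℕ) ≤ atTop) {S : K → K} (hS : Continuous S)
    (hSu : ∀ k, S (u k) = u (k + 1)) : MeasurePreserving S μ μ := by
  refine ⟨hS.measurable, ?_⟩
  have : (μ.map S).InnerRegular := Measure.InnerRegular.map_of_continuous hS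
  refine Measure.ext_of_integral_eq_on_compactlySupported fun h ↦ ?_
  rw [integral_map (f := h) hS.aemeasurable h.continuous.aestronglyMeasurable, ← sub_eq_zero]
  obtain ⟨M, hM⟩ := exists_norm_comp_le h.continuous u
  have hshift : (h ∘ S) ∘ u = fun k ↦ (h ∘ u) (k + 1) := funext fun k ↦ congrArg h (hSu k)
  refine tendsto_nhds_unique ((hμ (h ∘ S) (h.continuous.comp hS)).sub (hμ h h.continuous)) ?_
  refine ((tendsto_cesaroMean_succ_sub ℝ hM).mono_left hU).congr fun n ↦ ?_
  rw [hshift]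
  rfl

end EmpiricalLimit

lemma mem_of_forall_le_ker_apply_eq_zero {𝕜 X : Type*} [RCLike 𝕜] [NormedAddCommGroup X]
    [NormedSpace 𝕜 X] {S : Submodule 𝕜 X} (hS : IsClosed (S : Set X)) {y : X}
    (hy : ∀ b : StrongDual 𝕜 X, S ≤ b.ker → b y = 0) : y ∈ S := by
  have := hS
  rw [← Submodule.Quotient.mk_eq_zero]
  refine SeparatingDual.eq_zero_of_forall_dual_eq_zero (R := 𝕜) fun g ↦
    hy (g.comp S.mkQL) fun s hs ↦ ?_
  exact (congrArg g ((Submodule.Quotient.mk_eq_zero S).mpr hs)).trans (map_zero g)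

lemma exists_continuous_ultrafilter_extension {α E : Type*} [TopologicalSpace E] [T2Space E]
    {u : α → E} (hu : IsCompact (closure (Set.range u))) :
    ∃ Φ : Ultrafilter α → E, Continuous Φ ∧ ∀ n, Φ (pure n) = u n := by
  have := isCompact_iff_compactSpace.mp hu
  let v : α → closure (Set.range u) := fun n ↦ ⟨u n, subset_closure (Set.mem_range_self n)⟩
  exact ⟨Subtype.val ∘ Ultrafilter.extend v,
    continuous_subtype_val.comp (continuous_ultrafilter_extend v),
    fun n ↦ congrArg Subtype.val (ultrafilter_extend_pure v n)⟩

section WeaklyContinuous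

variable {𝕜 : Type*} [RCLike 𝕜] {X : Type*} [NormedAddCommGroup X] [NormedSpace 𝕜 X]
  {Ω : Type*} [TopologicalSpace Ω] {Φ : Ω → X}

lemma continuous_dual_comp_of_weak (hΦ : Continuous (toWeakSpace 𝕜 X ∘ Φ))
    (b : StrongDual 𝕜 X) : Continuous (b ∘ Φ) :=
  (WeakBilin.eval_continuous (topDualPairing 𝕜 X).flip b).comp hΦ

variable [NormedSpace ℝ X] [IsScalarTower ℝ 𝕜 X]

lemma isClosed_preimage_of_weak (hΦ : Continuous (toWeakSpace 𝕜 X ∘ Φ)) {s : Set X}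
    (hs : IsClosed s) (hconv : Convex ℝ s) : IsClosed (Φ ⁻¹' s) := by
  have hclosed : IsClosed (toWeakSpace 𝕜 X '' s) := by
    have := hconv.toWeakSpace_closure 𝕜
    rw [hs.closure_eq] at this
    exact this ▸ isClosed_closure
  simpa only [Set.preimage_comp, Set.preimage_image_eq s (toWeakSpace 𝕜 X).injective]
    using hclosed.preimage hΦ

lemma range_subset_of_weak {ι : Type*} {d : ι → Ω} (hd : DenseRange d)
    (hΦ : Continuous (toWeakSpace 𝕜 X ∘ Φ)) {s : Set X} (hs : IsClosed s) (hconv : Convex ℝ s)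
    (hds : ∀ i, Φ (d i) ∈ s) : Set.range Φ ⊆ s := by
  have huniv : closure (Set.range d) ⊆ Φ ⁻¹' s :=
    closure_minimal (Set.range_subset_iff.mpr hds) (isClosed_preimage_of_weak hΦ hs hconv)
  exact Set.range_subset_iff.mpr fun w ↦ huniv (hd w)

lemma stronglyMeasurable_of_weak [TopologicalSpace.SeparableSpace Ω] [MeasurableSpace Ω]
    [OpensMeasurableSpace Ω] (hΦ : Continuous (toWeakSpace 𝕜 X ∘ Φ)) : StronglyMeasurable Φ := by
  borelize X
  have hsep : TopologicalSpace.IsSeparable (Set.range Φ) := by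
    obtain ⟨D, hDc, hD⟩ := TopologicalSpace.exists_countable_dense Ω
    let S := (Submodule.span 𝕜 (Φ '' D)).topologicalClosure
    refine ((hDc.image Φ).isSeparable.span (R := 𝕜)).closure.mono ?_
    exact range_subset_of_weak hD.denseRange_val hΦ isClosed_closure
      (S.restrictScalars ℝ).convex fun w ↦
        subset_closure (Submodule.subset_span (Set.mem_image_of_mem Φ w.2))
  refine stronglyMeasurable_iff_measurable_separable.mpr ⟨measurable_of_isOpen fun V hV ↦ ?_, hsep⟩
  have hball (y : X) (hy : y ∈ V ∩ Set.range Φ) :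
      ∃ r > 0, Metric.closedBall y r ⊆ V :=
    Metric.nhds_basis_closedBall.mem_iff.mp (hV.mem_nhds hy.1)
  choose! r hr hrV using hball
  have hLindelof : IsLindelof (V ∩ Set.range Φ) := by
    have := (hsep.mono (Set.inter_subset_right (s := V))).secondCountableTopology
    exact isLindelof_iff_lindelofSpace.mpr inferInstance
  obtain ⟨t, htc, htV, ht⟩ := hLindelof.elim_nhds_subcover (fun y ↦ Metric.closedBall y (r y))
    fun y hy ↦ Metric.closedBall_mem_nhds y (hr y hy)
  have hpre : Φ ⁻¹' V = ⋃ y ∈ t, Φ ⁻¹' Metric.closedBall y (r y) := by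
    rw [← Set.preimage_iUnion₂]
    exact Set.Subset.antisymm (fun w hw ↦ ht ⟨hw, Set.mem_range_self w⟩)
      (Set.preimage_mono (Set.iUnion₂_subset fun y hy ↦ hrV y (htV y hy)))
  rw [hpre]
  exact .biUnion htc fun y _ ↦ (isClosed_preimage_of_weak hΦ Metric.isClosed_closedBall
    (convex_closedBall y (r y))).measurableSet

end WeaklyContinuous

section Support

variable {Ω : Type*} [TopologicalSpace Ω] [MeasurableSpace Ω] {μ : Measure Ω}

lemma mem_support_of_measurePreserving {S : Ω → Ω} (hS : Continuous S)
    (hSμ : MeasurePreserving S μ μ) {w : Ω} (hw : w ∈ μ.support) : S w ∈ μ.support := by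
  rw [Measure.mem_support_iff_forall] at hw ⊢
  intro V hV
  calc 0 < μ (S ⁻¹' V) := hw _ (hS.continuousAt hV)
    _ ≤ μ.map S V := Measure.le_map_apply hSμ.aemeasurable V
    _ = μ V := by rw [hSμ.map_eq]

lemma eqOn_support_of_ae_eq {E : Type*} [TopologicalSpace E] [T2Space E] {f g : Ω → E}
    (hf : Continuous f) (hg : Continuous g) (hfg : f =ᵐ[μ] g) : Set.EqOn f g μ.support :=
  fun _ hw ↦ Measure.support_subset_of_isClosed (isClosed_eq hf hg) hfg hw

end Support

section Idempotent

attribute [local instance] Ultrafilter.add Ultrafilter.addSemigroup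

lemma ultrafilter_add_pure_comm {M : Type*} [AddCommMagma M] (W : Ultrafilter M) (m : M) :
    W + pure m = pure m + W := by
  refine Ultrafilter.coe_inj.mp (Filter.ext' fun P ↦ ?_)
  simp [Ultrafilter.eventually_add, add_comm m]

lemma ultrafilter_pure_add_pure {M : Type*} [Add M] (m n : M) :
    (pure m + pure n : Ultrafilter M) = pure (m + n) :=
  rfl

lemma ultrafilter_add_pure_zero {M : Type*} [AddZeroClass M] (W : Ultrafilter M) :
    W + pure 0 = W := by
  refine Ultrafilter.coe_inj.mp (Filter.ext' fun P ↦ ?_)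
  simp [Ultrafilter.eventually_add]

lemma tendsto_of_tendsto_ultrafilter_add {M E : Type*} [Add M] [TopologicalSpace E]
    [RegularSpace E] {V W : Ultrafilter M} {u d : M → E} {c : E}
    (hu : Tendsto u ↑(V + W) (𝓝 c)) (hd : ∀ m, Tendsto (fun n ↦ u (m + n)) W (𝓝 (d m))) :
    Tendsto d V (𝓝 c) := by
  refine (closed_nhds_basis c).tendsto_right_iff.mpr fun s ⟨hs, hsc⟩ ↦ ?_
  filter_upwards [Ultrafilter.eventually_add V W (u · ∈ s) |>.mp (hu hs)] with m hm
  exact hsc.mem_of_tendsto (hd m) hm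

lemma tendsto_pow_of_ultrafilter_idempotent {𝕜 : Type*} [RCLike 𝕜] {p : Ultrafilter ℕ}
    (hp : p + p = p) {l : 𝕜} (hl : ‖l‖ = 1) : Tendsto (l ^ ·) p (𝓝 1) := by
  obtain ⟨c, hc⟩ := exists_tendsto_ultrafilter_of_norm_le (s := (l ^ ·)) p (M := 1)
    fun n ↦ by simp [hl]
  have hc_norm : ‖c‖ = 1 := tendsto_nhds_unique hc.norm (by simp [hl])
  have hc_shift (m : ℕ) : Tendsto (fun n ↦ l ^ (m + n)) p (𝓝 (l ^ m * c)) := by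
    simpa only [pow_add] using hc.const_mul (l ^ m)
  have hc_idem : c * c = c := tendsto_nhds_unique (hc.mul_const c)
    (tendsto_of_tendsto_ultrafilter_add (hp.symm ▸ hc) hc_shift)
  rwa [(mul_eq_left₀ (norm_ne_zero_iff.mp (by simp [hc_norm]))).mp hc_idem] at hc

variable [MeasurableSpace (Ultrafilter ℕ)] {μ : Measure (Ultrafilter ℕ)}

lemma ultrafilter_add_mem_support (hμ : MeasurePreserving (· + pure 1) μ μ) (V : Ultrafilter ℕ)
    {W : Ultrafilter ℕ} (hW : W ∈ μ.support) : V + W ∈ μ.support := by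
  have hpure (n : ℕ) : W + pure n ∈ μ.support := by
    induction n with
    | zero => rwa [ultrafilter_add_pure_zero]
    | succ n ih =>
      rw [← ultrafilter_pure_add_pure, ← add_assoc]
      exact mem_support_of_measurePreserving (Ultrafilter.continuous_add_left _) hμ ih
  refine (Measure.isClosed_support.preimage (Ultrafilter.continuous_add_left W)).mem_of_tendsto
    (Ultrafilter.tendsto_pure_self V) (Eventually.of_forall fun n ↦ ?_)
  rw [Set.mem_preimage, ← ultrafilter_add_pure_comm]
  exact hpure n

lemma exists_idempotent_mem_support [NeZero μ] [μ.Regular]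
    (hμ : MeasurePreserving (· + pure 1) μ μ) : ∃ p ∈ μ.support, p + p = p :=
  exists_idempotent_in_compact_add_subsemigroup Ultrafilter.continuous_add_left μ.support
    (nonempty_of_mem Measure.support_mem_ae_of_regular)
    Measure.isClosed_support.isCompact fun V _ _ hW ↦ ultrafilter_add_mem_support hμ V hW

end Idempotent

lemma exists_tendsto_apply_of_norm_le {𝕜 X ι : Type*} [RCLike 𝕜] [NormedAddCommGroup X]
    [NormedSpace 𝕜 X] (U : Ultrafilter ι) {g : ι → StrongDual 𝕜 X} {M : ℝ}
    (hg : ∀ i, ‖g i‖ ≤ M) : ∃ f : StrongDual 𝕜 X, ∀ z, Tendsto (g · z) U (𝓝 (f z)) := by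
  obtain ⟨f, -, hf⟩ := (WeakDual.isCompact_closedBall (0 : StrongDual 𝕜 X) M).ultrafilter_le_nhds
    (U.map (StrongDual.toWeakDual ∘ g)) <| le_principal_iff.mpr <|
      mem_map.mpr <| univ_mem' fun i ↦ mem_closedBall_zero_iff.mpr (hg i)
  exact ⟨WeakDual.toStrongDual f, fun z ↦ ((WeakDual.eval_continuous z).tendsto f).comp hf⟩

lemma pow_apply_eq_pow_smul {R M : Type*} [CommSemiring R] [TopologicalSpace M] [AddCommMonoid M]
    [Module R M] {T : M →L[R] M} {l : R} {z : M} (hz : T z = l • z) (k : ℕ) :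
    (T ^ k) z = l ^ k • z := by
  induction k with
  | zero => simp
  | succ k ih => rw [pow_succ', mul_apply_eq_comp, ih, map_smul, hz, smul_smul, pow_succ]

section Decomposition

variable {X : Type*} [NormedAddCommGroup X] [NormedSpace ℂ X] {T : X →L[ℂ] X} {x : X}

/-- `Φ` extends the orbit `k ↦ T ^ k x` to a weakly continuous map on the ultrafilters on `ℕ`, the
Stone–Čech compactification `βℕ`. -/
structure IsOrbitExtension (T : X →L[ℂ] X) (x : X) (Φ : Ultrafilter ℕ → X) : Prop where
  continuous_weak : Continuous (toWeakSpace ℂ X ∘ Φ)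
  apply_pure : ∀ k, Φ (pure k) = (T ^ k) x

lemma exists_isOrbitExtension
    (hx : IsCompact (closure (Set.range fun n : ℕ ↦ toWeakSpace ℂ X ((T ^ n) x)))) :
    ∃ Φ, IsOrbitExtension T x Φ := by
  obtain ⟨Φ, hΦ, hΦx⟩ := exists_continuous_ultrafilter_extension hx
  exact ⟨(toWeakSpace ℂ X).symm ∘ Φ, hΦ, fun k ↦ congrArg (toWeakSpace ℂ X).symm (hΦx k)⟩

attribute [local instance] Ultrafilter.add Ultrafilter.addSemigroup

section OrbitExtension

variable {Φ : Ultrafilter ℕ → X}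

lemma IsOrbitExtension.map_apply (hΦ : IsOrbitExtension T x Φ) (W : Ultrafilter ℕ) :
    T (Φ W) = Φ (W + pure 1) := by
  have hpure (k : ℕ) : T (Φ (pure k)) = Φ (pure k + pure 1) := by
    rw [ultrafilter_pure_add_pure, hΦ.apply_pure, hΦ.apply_pure, pow_succ', mul_apply_eq_comp]
  exact (toWeakSpace ℂ X).injective (congrFun (denseRange_pure.equalizer
    ((WeakSpace.map T).continuous.comp hΦ.continuous_weak)
    (hΦ.continuous_weak.comp (Ultrafilter.continuous_add_left (pure 1)))
    (funext fun k ↦ congrArg (toWeakSpace ℂ X) (hpure k))) W)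

lemma IsOrbitExtension.norm_apply_le (hΦ : IsOrbitExtension T x Φ) {C : ℝ}
    (hT : ∀ k : ℕ, ‖T ^ k‖ ≤ C) (W : Ultrafilter ℕ) : ‖Φ W‖ ≤ C * ‖x‖ := by
  have hrange := range_subset_of_weak denseRange_pure hΦ.continuous_weak
    (Metric.isClosed_closedBall (x := 0) (ε := C * ‖x‖)) (convex_closedBall _ _) fun k ↦ by
      rw [hΦ.apply_pure, mem_closedBall_zero_iff]
      exact (T ^ k).le_of_opNorm_le (hT k) x
  exact mem_closedBall_zero_iff.mp (hrange (Set.mem_range_self W))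

lemma IsOrbitExtension.exists_annihilator_apply_eq (hΦ : IsOrbitExtension T x Φ) {C : ℝ}
    (hT : ∀ k : ℕ, ‖T ^ k‖ ≤ C) {p : Ultrafilter ℕ} (hp : p + p = p) (c : StrongDual ℂ X) :
    ∃ b : StrongDual ℂ X, unimodularEigenspan T ≤ b.ker ∧
      ∀ k, b ((T ^ k) x) = c ((T ^ k) (x - Φ p)) := by
  obtain ⟨f, hf⟩ := exists_tendsto_apply_of_norm_le p (g := fun n ↦ c.comp (T ^ n))
    fun n ↦ (c.opNorm_comp_le _).trans (mul_le_mul_of_nonneg_left (hT n) (norm_nonneg c))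
  refine ⟨c - f, Submodule.span_le.mpr ?_, fun k ↦ ?_⟩
  · rintro z ⟨l, hl, hz⟩
    have hlim : Tendsto (fun n ↦ c ((T ^ n) z)) p (𝓝 (c z)) := by
      simpa [pow_apply_eq_pow_smul hz] using
        (tendsto_pow_of_ultrafilter_idempotent hp hl).mul_const (c z)
    simp [tendsto_nhds_unique (hf z) hlim]
  · have hlim : Tendsto (fun n ↦ c ((T ^ n) ((T ^ k) x))) p (𝓝 (c ((T ^ k) (Φ p)))) := by
      have := ((continuous_dual_comp_of_weak hΦ.continuous_weak (c.comp (T ^ k))).tendsto p).comp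
        p.tendsto_pure_self
      refine this.congr fun n ↦ ?_
      simp only [Function.comp_apply, hΦ.apply_pure, ContinuousLinearMap.comp_apply,
        ← mul_apply_eq_comp, ← pow_add, add_comm k]
    rw [sub_apply, tendsto_nhds_unique (hf ((T ^ k) x)) hlim, map_sub, map_sub]

variable [MeasurableSpace (Ultrafilter ℕ)] [BorelSpace (Ultrafilter ℕ)]
  {μ : Measure (Ultrafilter ℕ)} [IsFiniteMeasure μ]

lemma IsOrbitExtension.dual_comp_ae_eq_zero [CompleteSpace X] (hΦ : IsOrbitExtension T x Φ)
    (hμ : MeasurePreserving (· + pure 1) μ μ) {C : ℝ} (hT : ∀ k : ℕ, ‖T ^ k‖ ≤ C)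
    {b : StrongDual ℂ X} (hb : unimodularEigenspan T ≤ b.ker) : b ∘ Φ =ᵐ[μ] 0 := by
  have : TopologicalSpace.SeparableSpace (Ultrafilter ℕ) :=
    ⟨_, Set.countable_range pure, denseRange_pure⟩
  have hΦ_memLp : MemLp Φ 2 μ := .of_bound
    (stronglyMeasurable_of_weak hΦ.continuous_weak).aestronglyMeasurable (C * ‖x‖)
    (Eventually.of_forall (hΦ.norm_apply_le hT))
  have hshift : Lp.compMeasurePreserving _ hμ (hΦ_memLp.toLp Φ) = T.compLp (hΦ_memLp.toLp Φ) := by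
    refine Lp.ext ?_
    filter_upwards [Lp.coeFn_compMeasurePreserving (hΦ_memLp.toLp Φ) hμ,
      hμ.quasiMeasurePreserving.ae hΦ_memLp.coeFn_toLp, T.coeFn_compLp (hΦ_memLp.toLp Φ),
      hΦ_memLp.coeFn_toLp] with W hcomp hΦshift hTcomp hΦW
    rw [hcomp, Function.comp_apply, hΦshift, hTcomp, hΦW, hΦ.map_apply]
  have hzero := dualCompLp_eq_zero_of_unimodularEigenspan_le_ker hμ hT hshift hb
  filter_upwards [b.coeFn_compLp (hΦ_memLp.toLp Φ), hΦ_memLp.coeFn_toLp, Lp.coeFn_zero ℂ 2 μ]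
    with W hbcomp hΦW hzeroW
  rw [← dualCompLp_apply, hzero, hzeroW, hΦW] at hbcomp
  exact hbcomp.symm

end OrbitExtension

theorem exists_mem_closure_unimodularEigenspan_tendsto_cesaroMean_norm_apply [CompleteSpace X]
    {C : ℝ} (hT : ∀ k : ℕ, ‖T ^ k‖ ≤ C)
    (hx : IsCompact (closure (Set.range fun n : ℕ ↦ toWeakSpace ℂ X ((T ^ n) x))))
    {U : Ultrafilter ℕ} (hU : (U : Filter ℕ) ≤ atTop) :
    ∃ r ∈ (unimodularEigenspan T).topologicalClosure, ∀ c : StrongDual ℂ X,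
      Tendsto (fun n ↦ cesaroMean ℝ n fun k ↦ ‖c ((T ^ k) (x - r))‖) U (𝓝 0) := by
  borelize (Ultrafilter ℕ)
  obtain ⟨Φ, hΦ⟩ := exists_isOrbitExtension hx
  obtain ⟨μ, _, _, hμ⟩ := exists_measure_isEmpiricalLimit hU (pure : ℕ → Ultrafilter ℕ)
  have hinv : MeasurePreserving (· + pure 1) μ μ := hμ.measurePreserving hU
    (Ultrafilter.continuous_add_left _) fun k ↦ ultrafilter_pure_add_pure k 1
  obtain ⟨p, hp_supp, hp⟩ := exists_idempotent_mem_support hinv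
  refine ⟨Φ p, mem_of_forall_le_ker_apply_eq_zero isClosed_closure fun b hb ↦ ?_, fun c ↦ ?_⟩
  · have hae := hΦ.dual_comp_ae_eq_zero hinv hT
      ((Submodule.le_topologicalClosure _).trans hb)
    exact eqOn_support_of_ae_eq (continuous_dual_comp_of_weak hΦ.continuous_weak b)
      continuous_const hae hp_supp
  · obtain ⟨b, hb, hbc⟩ := hΦ.exists_annihilator_apply_eq hT hp c
    have hae := hΦ.dual_comp_ae_eq_zero hinv hT hb
    have hint : ∫ W, ‖b (Φ W)‖ ∂μ = 0 :=
      integral_eq_zero_of_ae (hae.mono fun W hW ↦ norm_eq_zero.mpr hW)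
    have hlim := hμ _ (continuous_dual_comp_of_weak hΦ.continuous_weak b).norm
    simpa only [Function.comp_def, hint, hΦ.apply_pure, hbc] using hlim

end Decomposition

lemma exists_birkhoffSum_le_of_forall_exists_neg {K : Type*} [TopologicalSpace K] {s : Set K}
    (hs : IsCompact s) {S : K → K} (hS : Continuous S) (hSs : Set.MapsTo S s s) {G : K → ℝ}
    (hG : Continuous G) (hneg : ∀ w ∈ s, ∃ n ≠ 0, birkhoffSum S G n w < 0) :
    ∃ B, ∀ n, ∀ w ∈ s, birkhoffSum S G n w ≤ B := by
  have hcont (n : ℕ) : Continuous (birkhoffSum S G n) :=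
    continuous_finsetSum _ fun k _ ↦ hG.comp (hS.iterate k)
  obtain ⟨N, hN⟩ := hs.elim_directed_cover
    (fun N ↦ ⋃ n ∈ Set.Icc 1 N, {w | birkhoffSum S G n w < 0})
    (fun N ↦ isOpen_biUnion fun n _ ↦ isOpen_lt (hcont n) continuous_const)
    (fun w hw ↦ by
      obtain ⟨n, hn, hlt⟩ := hneg w hw
      exact Set.mem_iUnion.mpr
        ⟨n, Set.mem_biUnion ⟨Nat.one_le_iff_ne_zero.mpr hn, le_rfl⟩ hlt⟩)
    (Monotone.directed_le fun _ _ hle ↦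
      Set.biUnion_subset_biUnion_left (Set.Icc_subset_Icc_right hle))
  obtain ⟨M, hM⟩ := hs.exists_bound_of_continuousOn hG.continuousOn
  refine ⟨N * M, fun n ↦ ?_⟩
  induction n using Nat.strong_induction_on with
  | h n ih =>
    intro w hw
    obtain hn | hn := le_or_gt n N
    · calc birkhoffSum S G n w ≤ ∑ _k ∈ range n, M := sum_le_sum fun k _ ↦
            (le_abs_self _).trans (hM _ (hSs.iterate k hw))
        _ = n * M := by simp
        _ ≤ N * M := by
            gcongr
            exact (norm_nonneg _).trans (hM w hw)
    · obtain ⟨m, ⟨hm, hmN⟩, hlt⟩ := Set.mem_iUnion₂.mp (hN hw)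
      calc birkhoffSum S G n w
          = birkhoffSum S G m w + birkhoffSum S G (n - m) (S^[m] w) := by
            rw [← birkhoffSum_add, Nat.add_sub_cancel' (hmN.trans hn.le)]
        _ ≤ 0 + N * M :=
            add_le_add (le_of_lt hlt) (ih _ (by lia) _ (hSs.iterate m hw))
        _ = N * M := zero_add _

section FlightVector

variable {𝕜 : Type*} [RCLike 𝕜] {X : Type*} [NormedAddCommGroup X] [NormedSpace 𝕜 X]

/-- `y` is a flight vector of `T`: the Cesàro means of `‖b (T ^ k y)‖` tend to `0`, uniformly for
`b` in the unit ball of the dual. -/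
def IsFlightVector (T : X →L[𝕜] X) (y : X) : Prop :=
  TendstoUniformlyOn (fun n (b : StrongDual 𝕜 X) ↦ cesaroMean ℝ n fun k ↦ ‖b ((T ^ k) y)‖) 0 atTop
    (Metric.closedBall 0 1)

/-- The functionals `b` with `‖b ∘ T ^ k‖ ≤ C` for all `k`, as a subset of the weak dual. -/
def powerBoundedDual (T : X →L[𝕜] X) (C : ℝ) : Set (WeakDual 𝕜 X) :=
  {b | ∀ (k : ℕ) (z : X), ‖b ((T ^ k) z)‖ ≤ C * ‖z‖}

/-- Precomposition with `T` on the weak dual. -/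
noncomputable def weakDualComp (T : X →L[𝕜] X) (b : WeakDual 𝕜 X) : WeakDual 𝕜 X :=
  StrongDual.toWeakDual (b.toStrongDual.comp T)

variable {T : X →L[𝕜] X}

lemma isCompact_powerBoundedDual {C : ℝ} (hC : 0 ≤ C) : IsCompact (powerBoundedDual T C) := by
  refine (WeakDual.isCompact_closedBall (0 : StrongDual 𝕜 X) C).of_isClosed_subset ?_ ?_
  · simp only [powerBoundedDual, Set.ofPred_forall]
    exact isClosed_iInter fun k ↦ isClosed_iInter fun z ↦
      isClosed_le (WeakDual.eval_continuous _).norm continuous_const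
  · intro b hb
    exact mem_closedBall_zero_iff.mpr (ContinuousLinearMap.opNorm_le_bound _ hC (hb 0))

lemma continuous_weakDualComp : Continuous (weakDualComp T) :=
  WeakDual.continuous_of_continuous_eval fun z ↦ WeakDual.eval_continuous (T z)

lemma mapsTo_weakDualComp (C : ℝ) :
    Set.MapsTo (weakDualComp T) (powerBoundedDual T C) (powerBoundedDual T C) := by
  intro b hb k z
  have hbk := hb (k + 1) z
  rwa [pow_succ', mul_apply_eq_comp] at hbk

lemma iterate_weakDualComp_apply (b : WeakDual 𝕜 X) (k : ℕ) (z : X) :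
    (weakDualComp T)^[k] b z = b ((T ^ k) z) := by
  induction k generalizing b with
  | zero => rfl
  | succ k ih =>
    rw [Function.iterate_succ_apply, ih, pow_succ', mul_apply_eq_comp]
    rfl

lemma birkhoffSum_weakDualComp (ε : ℝ) (y : X) (n : ℕ) (b : WeakDual 𝕜 X) :
    birkhoffSum (weakDualComp T) (fun w ↦ ‖w (T y)‖ - ε) n b =
      n * (cesaroMean ℝ n (fun k ↦ ‖b ((T ^ k) y)‖) - ε) := by
  have hsum : ∑ k ∈ range n, ‖b ((T ^ (k + 1)) y)‖ = ∑ k ∈ Icc 1 n, ‖b ((T ^ k) y)‖ := by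
    rw [range_eq_Ico, sum_Ico_add' (fun k ↦ ‖b ((T ^ k) y)‖) 0 n 1]
    rfl
  obtain rfl | hn := eq_or_ne n 0
  · simp
  · simp only [birkhoffSum, iterate_weakDualComp_apply, ← mul_apply_eq_comp, ← pow_succ,
      sum_sub_distrib, hsum, sum_const, card_range, nsmul_eq_mul, cesaroMean_apply, smul_eq_mul]
    field_simp

lemma isFlightVector_of_tendsto_cesaroMean {C : ℝ} (hT : ∀ k : ℕ, ‖T ^ k‖ ≤ C) {y : X}
    {U : Ultrafilter ℕ} (hU : (U : Filter ℕ) ≤ atTop)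
    (hy : ∀ b : StrongDual 𝕜 X,
      Tendsto (fun n ↦ cesaroMean ℝ n fun k ↦ ‖b ((T ^ k) y)‖) U (𝓝 0)) :
    IsFlightVector T y := by
  have hC : 0 ≤ C := (norm_nonneg _).trans (hT 0)
  refine Metric.tendstoUniformlyOn_iff.mpr fun ε hε ↦ ?_
  have hneg (b : WeakDual 𝕜 X) :
      ∃ n ≠ 0, birkhoffSum (weakDualComp T) (fun w ↦ ‖w (T y)‖ - ε / 2) n b < 0 := by
    obtain ⟨n, hmean, hn⟩ := (((hy b.toStrongDual).eventually_lt_const (half_pos hε)).and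
      (hU (eventually_gt_atTop 0))).exists
    refine ⟨n, hn.ne', ?_⟩
    rw [birkhoffSum_weakDualComp]
    exact mul_neg_of_pos_of_neg (Nat.cast_pos.mpr hn) (sub_neg.mpr hmean)
  obtain ⟨B, hB⟩ := exists_birkhoffSum_le_of_forall_exists_neg (isCompact_powerBoundedDual hC)
    continuous_weakDualComp (mapsTo_weakDualComp C) (G := fun w ↦ ‖w (T y)‖ - ε / 2)
    ((WeakDual.eval_continuous (T y)).norm.sub continuous_const) fun b _ ↦ hneg b
  have hBn : ∀ᶠ n : ℕ in atTop, B / n < ε / 2 :=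
    (tendsto_const_div_atTop_nhds_zero_nat B).eventually_lt_const (half_pos hε)
  filter_upwards [hBn, eventually_gt_atTop 0] with n hBn hn b hb
  have hbK : StrongDual.toWeakDual b ∈ powerBoundedDual T C := fun k z ↦
    calc ‖b ((T ^ k) z)‖ ≤ 1 * ‖(T ^ k) z‖ := b.le_of_opNorm_le (mem_closedBall_zero_iff.mp hb) _
      _ = ‖(T ^ k) z‖ := one_mul _
      _ ≤ C * ‖z‖ := (T ^ k).le_of_opNorm_le (hT k) z
  have hmean := hB n _ hbK
  rw [birkhoffSum_weakDualComp, ← le_div_iff₀' (Nat.cast_pos.mpr hn)] at hmean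
  have hnonneg : 0 ≤ cesaroMean ℝ n fun k ↦ ‖b ((T ^ k) y)‖ :=
    (map_zero (cesaroMean ℝ n)).symm.trans_le (cesaroMean_mono (fun k ↦ norm_nonneg _) n)
  rw [Pi.zero_apply, dist_zero_left, Real.norm_of_nonneg hnonneg]
  exact (sub_le_iff_le_add.mp hmean).trans_lt (by linarith)

end FlightVector

section ConvergenceSubmodule

variable {𝕜 X Y : Type*} [RCLike 𝕜] [NormedAddCommGroup X] [NormedSpace 𝕜 X]
  [NormedAddCommGroup Y] [NormedSpace 𝕜 Y]

/-- The subspace of vectors `z` for which the sequence `A n z` converges. -/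
def convergenceSubmodule (A : ℕ → X →L[𝕜] Y) : Submodule 𝕜 X where
  carrier := {z | ∃ y, Tendsto (A · z) atTop (𝓝 y)}
  zero_mem' := ⟨0, by simp⟩
  add_mem' := fun ⟨y, hy⟩ ⟨y', hy'⟩ ↦ ⟨y + y', by simpa using hy.add hy'⟩
  smul_mem' := fun c _ ⟨y, hy⟩ ↦ ⟨c • y, by simpa using hy.const_smul c⟩

lemma isClosed_convergenceSubmodule [CompleteSpace Y] {A : ℕ → X →L[𝕜] Y} {K : ℝ}
    (hA : ∀ n, ‖A n‖ ≤ K) : IsClosed (convergenceSubmodule A : Set X) := by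
  have hK : 0 ≤ K := (norm_nonneg _).trans (hA 0)
  refine isClosed_of_closure_subset fun z hz ↦
    cauchySeq_tendsto_of_complete (Metric.cauchySeq_iff.mpr fun ε hε ↦ ?_)
  obtain ⟨z', ⟨y, hy⟩, hzz'⟩ := Metric.mem_closure_iff.mp hz (ε / (3 * (K + 1))) (by positivity)
  have hclose (n : ℕ) : dist (A n z) (A n z') < ε / 3 :=
    calc dist (A n z) (A n z') ≤ K * dist z z' := by
          rw [dist_eq_norm, dist_eq_norm, ← map_sub]
          exact (A n).le_of_opNorm_le (hA n) _
      _ ≤ (K + 1) * dist z z' := by gcongr; linarith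
      _ < (K + 1) * (ε / (3 * (K + 1))) := by gcongr
      _ = ε / 3 := by field_simp
  obtain ⟨N, hN⟩ := Metric.cauchySeq_iff.mp hy.cauchySeq (ε / 3) (by positivity)
  refine ⟨N, fun m hm n hn ↦ ?_⟩
  calc dist (A m z) (A n z)
      ≤ dist (A m z) (A m z') + dist (A m z') (A n z') + dist (A n z') (A n z) :=
        dist_triangle4 _ _ _ _
    _ < ε / 3 + ε / 3 + ε / 3 := by
        gcongr
        · exact hclose m
        · exact hN m hm n hn
        · exact (dist_comm _ _).trans_lt (hclose n)
    _ = ε := by ring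

end ConvergenceSubmodule

section WeightedMean

variable {𝕜 : Type*} [RCLike 𝕜]

/-- A sequence is Hartman if its Cesàro means against every unimodular character `k ↦ conj l ^ k`
converge. -/
def IsHartman (a : ℕ → 𝕜) : Prop :=
  ∀ l : 𝕜, ‖l‖ = 1 →
    ∃ c, Tendsto (fun n ↦ cesaroMean 𝕜 n fun k ↦ a k * starRingEnd 𝕜 l ^ k) atTop (𝓝 c)

/-- Bounded sequences approximate `a` in the seminorm `sup_n (1/n) ∑_{k=1}^n ‖a k‖`. -/
def IsCesaroApproxByBounded (a : ℕ → 𝕜) : Prop :=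
  ∀ δ : ℝ, 0 < δ → ∃ (β : ℕ → 𝕜) (M : ℝ), (∀ k, ‖β k‖ ≤ M) ∧
    ∀ n, cesaroMean ℝ n (fun k ↦ ‖a k - β k‖) ≤ δ

lemma isCesaroApproxByBounded_of_growth {a : ℕ → 𝕜} {φ : ℝ → ℝ}
    (hφ_nonneg : ∀ t, 0 ≤ t → 0 ≤ φ t) (hφ : Tendsto φ atTop atTop) {s : ℝ}
    (ha : ∀ n, cesaroMean ℝ n (fun k ↦ ‖a k‖ * φ ‖a k‖) ≤ s) : IsCesaroApproxByBounded a := by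
  intro δ hδ
  have hs : 0 ≤ s := by simpa [cesaroMean_apply] using ha 0
  obtain ⟨R, hR⟩ := eventually_atTop.mp (hφ.eventually_ge_atTop ((s + 1) / δ))
  refine ⟨fun k ↦ if ‖a k‖ ≤ R then a k else 0, max R 0, fun k ↦ ?_, fun n ↦ ?_⟩
  · beta_reduce
    split_ifs with hk
    · exact hk.trans (le_max_left _ _)
    · simp
  have hterm (k : ℕ) : ‖a k - if ‖a k‖ ≤ R then a k else 0‖ ≤
      (δ / (s + 1)) • (‖a k‖ * φ ‖a k‖) := by
    have hφk := hφ_nonneg _ (norm_nonneg (a k))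
    split_ifs with hk
    · rw [sub_self, norm_zero]
      positivity
    · calc ‖a k - 0‖ = δ / (s + 1) * (‖a k‖ * ((s + 1) / δ)) := by rw [sub_zero]; field_simp
        _ ≤ δ / (s + 1) * (‖a k‖ * φ ‖a k‖) := by gcongr; exact hR _ (le_of_not_ge hk)
  calc cesaroMean ℝ n (fun k ↦ ‖a k - if ‖a k‖ ≤ R then a k else 0‖)
      ≤ cesaroMean ℝ n ((δ / (s + 1)) • fun k ↦ ‖a k‖ * φ ‖a k‖) := cesaroMean_mono hterm n
    _ = δ / (s + 1) * cesaroMean ℝ n (fun k ↦ ‖a k‖ * φ ‖a k‖) := by rw [map_smul, smul_eq_mul]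
    _ ≤ δ / (s + 1) * (s + 1) := by gcongr; exact (ha n).trans (by linarith)
    _ = δ := by field_simp

variable {X : Type*} [NormedAddCommGroup X] [NormedSpace 𝕜 X] {T : X →L[𝕜] X}

/-- The weighted mean `(1/n) ∑_{k=1}^n a k • T ^ k`, as an operator. -/
noncomputable def weightedMean (a : ℕ → 𝕜) (T : X →L[𝕜] X) (n : ℕ) : X →L[𝕜] X :=
  cesaroMean 𝕜 n fun k ↦ a k • T ^ k

lemma weightedMean_apply (a : ℕ → 𝕜) (n : ℕ) (z : X) :
    weightedMean a T n z = cesaroMean 𝕜 n fun k ↦ a k • (T ^ k) z :=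
  map_cesaroMean 𝕜 (ContinuousLinearMap.apply 𝕜 X z).toLinearMap n _

lemma weightedMean_sub (a β : ℕ → 𝕜) (n : ℕ) :
    weightedMean a T n - weightedMean β T n = weightedMean (a - β) T n := by
  simp only [weightedMean, ← map_sub, Pi.sub_def, sub_smul]

variable {C : ℝ} {a : ℕ → 𝕜}

lemma norm_weightedMean_le (hT : ∀ k : ℕ, ‖T ^ k‖ ≤ C) (a : ℕ → 𝕜) (n : ℕ) :
    ‖weightedMean a T n‖ ≤ C * cesaroMean ℝ n (‖a ·‖) :=
  calc ‖weightedMean a T n‖ ≤ cesaroMean ℝ n (fun k ↦ ‖a k • T ^ k‖) := norm_cesaroMean_le 𝕜 n _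
    _ ≤ cesaroMean ℝ n (C • (‖a ·‖)) := cesaroMean_mono (fun k ↦ by
        rw [norm_smul, mul_comm]
        exact mul_le_mul_of_nonneg_right (hT k) (norm_nonneg _)) n
    _ = C * cesaroMean ℝ n (‖a ·‖) := map_smul _ _ _

lemma IsCesaroApproxByBounded.exists_norm_weightedMean_le (ha : IsCesaroApproxByBounded a)
    (hT : ∀ k : ℕ, ‖T ^ k‖ ≤ C) : ∃ K, ∀ n, ‖weightedMean a T n‖ ≤ K := by
  have hC : 0 ≤ C := (norm_nonneg _).trans (hT 0)
  obtain ⟨β, M, hβ, haβ⟩ := ha 1 one_pos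
  refine ⟨C * (1 + M), fun n ↦ (norm_weightedMean_le hT a n).trans ?_⟩
  gcongr
  calc cesaroMean ℝ n (‖a ·‖)
      ≤ cesaroMean ℝ n ((fun k ↦ ‖a k - β k‖) + fun _ ↦ M) := cesaroMean_mono (fun k ↦ by
        calc ‖a k‖ ≤ ‖a k - β k‖ + ‖β k‖ := norm_le_norm_sub_add _ _
          _ ≤ ‖a k - β k‖ + M := by gcongr; exact hβ k) n
    _ = cesaroMean ℝ n (fun k ↦ ‖a k - β k‖) + cesaroMean ℝ n (fun _ ↦ M) := map_add _ _ _
    _ ≤ 1 + M := add_le_add (haβ n)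
        (cesaroMean_le_of_le ((norm_nonneg _).trans (hβ 0)) (fun _ ↦ le_rfl) n)

lemma IsFlightVector.tendsto_weightedMean_of_bounded {y : X} (hy : IsFlightVector T y) {M : ℝ}
    (ha : ∀ k, ‖a k‖ ≤ M) : Tendsto (weightedMean a T · y) atTop (𝓝 0) := by
  have hM : 0 ≤ M := (norm_nonneg _).trans (ha 0)
  refine Metric.tendsto_nhds.mpr fun ε hε ↦ ?_
  filter_upwards [Metric.tendstoUniformlyOn_iff.mp hy (ε / (M + 1)) (by positivity)] with n hn
  obtain ⟨b, hb, hby⟩ := exists_dual_vector'' 𝕜 (weightedMean a T n y)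
  have hmean : cesaroMean ℝ n (fun k ↦ ‖b ((T ^ k) y)‖) < ε / (M + 1) := by
    have := hn b (mem_closedBall_zero_iff.mpr hb)
    rw [Pi.zero_apply, dist_zero_left] at this
    exact (le_abs_self _).trans_lt this
  calc dist (weightedMean a T n y) 0 = ‖b (weightedMean a T n y)‖ := by
        rw [dist_zero_right, hby, RCLike.norm_ofReal, abs_norm]
    _ = ‖cesaroMean 𝕜 n fun k ↦ b (a k • (T ^ k) y)‖ := by
        rw [weightedMean_apply]
        exact congrArg _ (map_cesaroMean 𝕜 b.toLinearMap n _)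
    _ ≤ cesaroMean ℝ n (fun k ↦ ‖b (a k • (T ^ k) y)‖) := norm_cesaroMean_le 𝕜 n _
    _ ≤ cesaroMean ℝ n ((M + 1) • fun k ↦ ‖b ((T ^ k) y)‖) := cesaroMean_mono (fun k ↦ by
        rw [map_smul, norm_smul]
        exact mul_le_mul_of_nonneg_right ((ha k).trans (by linarith)) (norm_nonneg _)) n
    _ = (M + 1) * cesaroMean ℝ n (fun k ↦ ‖b ((T ^ k) y)‖) := map_smul _ _ _
    _ < (M + 1) * (ε / (M + 1)) := by gcongr
    _ = ε := by field_simp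

lemma IsFlightVector.tendsto_weightedMean {y : X} (hy : IsFlightVector T y)
    (hT : ∀ k : ℕ, ‖T ^ k‖ ≤ C) (ha : IsCesaroApproxByBounded a) :
    Tendsto (weightedMean a T · y) atTop (𝓝 0) := by
  have hC : 0 ≤ C := (norm_nonneg _).trans (hT 0)
  refine Metric.tendsto_nhds.mpr fun ε hε ↦ ?_
  obtain ⟨β, M, hβ, haβ⟩ := ha (ε / (2 * (C * ‖y‖ + 1))) (by positivity)
  filter_upwards [Metric.tendsto_nhds.mp (hy.tendsto_weightedMean_of_bounded hβ) (ε / 2)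
    (half_pos hε)] with n hn
  have hclose : ‖weightedMean a T n y - weightedMean β T n y‖ < ε / 2 :=
    calc ‖weightedMean a T n y - weightedMean β T n y‖
        ≤ C * cesaroMean ℝ n (fun k ↦ ‖a k - β k‖) * ‖y‖ := by
          rw [← sub_apply, weightedMean_sub]
          exact (weightedMean (a - β) T n).le_of_opNorm_le (norm_weightedMean_le hT (a - β) n) y
      _ ≤ C * (ε / (2 * (C * ‖y‖ + 1))) * ‖y‖ := by gcongr; exact haβ n
      _ < ε / 2 := by field_simp; linarith
  rw [dist_zero_right] at hn ⊢
  calc ‖weightedMean a T n y‖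
      ≤ ‖weightedMean a T n y - weightedMean β T n y‖ + ‖weightedMean β T n y‖ :=
        norm_le_norm_sub_add _ _
    _ < ε / 2 + ε / 2 := add_lt_add hclose hn
    _ = ε := add_halves ε

lemma IsHartman.unimodularEigenspan_le_convergenceSubmodule (ha : IsHartman a) :
    unimodularEigenspan T ≤ convergenceSubmodule (weightedMean a T) := by
  refine Submodule.span_le.mpr ?_
  rintro z ⟨l, hl, hz⟩
  obtain ⟨c, hc⟩ := ha (starRingEnd 𝕜 l) (by rwa [RCLike.norm_conj])
  refine ⟨c • z, (hc.smul_const z).congr fun n ↦ ?_⟩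
  simpa only [weightedMean_apply, pow_apply_eq_pow_smul hz, smul_smul, RCLike.conj_conj,
    LinearMap.toSpanSingleton_apply] using
    map_cesaroMean 𝕜 (LinearMap.toSpanSingleton 𝕜 X z) n (fun k ↦ a k * l ^ k)

end WeightedMean

lemma exists_norm_pow_le_of_isCompact_closure_weak_orbit {𝕜 X : Type*} [RCLike 𝕜]
    [NormedAddCommGroup X] [NormedSpace 𝕜 X] [CompleteSpace X] {T : X →L[𝕜] X}
    (hT : ∀ x : X,
      IsCompact (closure (Set.range fun n : ℕ ↦ toWeakSpace 𝕜 X ((T ^ n) x)))) :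
    ∃ C, ∀ k : ℕ, ‖T ^ k‖ ≤ C := by
  refine banach_steinhaus (g := fun k : ℕ ↦ T ^ k) fun x ↦ ?_
  obtain ⟨C, hC⟩ := banach_steinhaus
    (g := fun k : ℕ ↦ NormedSpace.inclusionInDoubleDual 𝕜 X ((T ^ k) x)) fun b ↦ by
      obtain ⟨C, hC⟩ := (hT x).exists_bound_of_continuousOn
        (continuous_dual_comp_of_weak continuous_id b).continuousOn
      exact ⟨C, fun k ↦ hC _ (subset_closure (Set.mem_range_self k))⟩
  refine ⟨C, fun k ↦ ?_⟩
  exact ((NormedSpace.inclusionInDoubleDualLi 𝕜).norm_map ((T ^ k) x)).symm.trans_le (hC k)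

theorem stmt2_general (a : ℕ → ℂ)
    (hHartman : ∀ l : ℂ, ‖l‖ = 1 → ∃ c : ℂ,
      Tendsto (fun n : ℕ => (n : ℂ)⁻¹ * ∑ k ∈ Icc 1 n, a k * (starRingEnd ℂ l) ^ k)
        atTop (nhds c))
    (φ : ℝ → ℝ) (hφ_pos : ∀ t, 0 ≤ t → 0 ≤ φ t)
    (hφ_top : Tendsto φ atTop atTop)
    (ha : ∃ s : ℝ, ∀ n : ℕ, (n : ℝ)⁻¹ * ∑ k ∈ Icc 1 n, ‖a k‖ * φ ‖a k‖ ≤ s)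
    {X : Type*} [NormedAddCommGroup X] [NormedSpace ℂ X] [CompleteSpace X]
    (T : X →L[ℂ] X) (hT : ∃ C, ∀ k : ℕ, ‖T ^ k‖ ≤ C) (x : X)
    (hx : IsCompact (closure (Set.range fun n : ℕ => toWeakSpace ℂ X ((T ^ n) x)))) :
    ∃ y : X, Tendsto (fun n : ℕ => (n : ℂ)⁻¹ • ∑ k ∈ Icc 1 n, a k • (T ^ k) x)
      atTop (nhds y) := by
  obtain ⟨s, hs⟩ := ha
  obtain ⟨C, hC⟩ := hT
  have ha_hartman : IsHartman a := by
    simpa only [IsHartman, cesaroMean_apply, smul_eq_mul] using hHartman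
  have ha_approx : IsCesaroApproxByBounded a :=
    isCesaroApproxByBounded_of_growth hφ_pos hφ_top (s := s)
      (by simpa only [cesaroMean_apply, smul_eq_mul] using hs)
  obtain ⟨K, hK⟩ := ha_approx.exists_norm_weightedMean_le hC
  obtain ⟨r, hr, hxr⟩ := exists_mem_closure_unimodularEigenspan_tendsto_cesaroMean_norm_apply
    hC hx Nat.hyperfilter_le_atTop
  have hr_conv : r ∈ convergenceSubmodule (weightedMean a T) :=
    Submodule.topologicalClosure_minimal _ ha_hartman.unimodularEigenspan_le_convergenceSubmodule
      (isClosed_convergenceSubmodule hK) hr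
  have hxr_conv : x - r ∈ convergenceSubmodule (weightedMean a T) :=
    ⟨0, (isFlightVector_of_tendsto_cesaroMean hC Nat.hyperfilter_le_atTop hxr).tendsto_weightedMean
      hC ha_approx⟩
  obtain ⟨y, hy⟩ : x ∈ convergenceSubmodule (weightedMean a T) := by
    simpa only [sub_add_cancel] using add_mem hxr_conv hr_conv
  exact ⟨y, by simpa only [weightedMean_apply, cesaroMean_apply] using hy⟩

/-- Let `(a_k)` be a Hartman sequence (i.e. `lim_n (1/n) ∑_{k=1}^n a_k λ̄^k`
exists for every unimodular `λ`) satisfying `sup_n (1/n) ∑_{k=1}^n |a_k| φ(|a_k|) < ∞` for some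
strictly increasing `φ : ℝ⁺ → ℝ⁺` with `φ(x) → ∞`. Then for every weakly almost periodic
operator `T` on a complex Banach space `X` and every `x ∈ X`, the averages
`(1/n) ∑_{k=1}^n a_k T^k x` converge in norm. -/
theorem stmt2 (a : ℕ → ℂ)
    (hHartman : ∀ l : ℂ, ‖l‖ = 1 → ∃ c : ℂ,
      Tendsto (fun n : ℕ => (n : ℂ)⁻¹ * ∑ k ∈ Icc 1 n, a k * (starRingEnd ℂ l) ^ k)
        atTop (nhds c))
    (φ : ℝ → ℝ) (hφ_pos : ∀ t, 0 ≤ t → 0 ≤ φ t)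
    (hφ_mono : StrictMonoOn φ (Set.Ici (0 : ℝ)))
    (hφ_top : Tendsto φ atTop atTop)
    (ha : ∃ s : ℝ, ∀ n : ℕ, (n : ℝ)⁻¹ * ∑ k ∈ Icc 1 n, ‖a k‖ * φ ‖a k‖ ≤ s)
    {X : Type*} [NormedAddCommGroup X] [NormedSpace ℂ X] [CompleteSpace X]
    (T : X →L[ℂ] X)
    (hWAP : ∀ x : X,
      IsCompact (closure (Set.range fun n : ℕ => toWeakSpace ℂ X ((T ^ n) x))))
    (x : X) :
    ∃ y : X, Tendsto (fun n : ℕ => (n : ℂ)⁻¹ • ∑ k ∈ Icc 1 n, a k • (T ^ k) x)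
      atTop (nhds y) := by
  exact stmt2_general a hHartman φ hφ_pos hφ_top ha T
    (exists_norm_pow_le_of_isCompact_closure_weak_orbit hWAP) x (hWAP x)
end

section
/- Let (a_k)_{k≥1} be a complex sequence. Then the following are equivalent: (i) sup_n (1/n)∑_{k=1}^n |a_k| < ∞; (ii) for every complex sequence (b_n) with b_n → 0 one has (1/n)∑_{k=1}^n |a_k b_k| → 0; (iii) for every complex sequence (b_n) with b_n → 0 the sequence ((1/n)∑_{k=1}^n a_k b_k)_n is bounded; (iv) for every bounded complex sequence (b_n) the sequence ((1/n)∑_{k=1}^n a_k b_k)_n is bounded. -/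
open Filter Finset

/-! The averages are the transform of `b` by the matrix with entries `c n k = a k / n`, `1 ≤ k ≤ n`,
whose rows are finite and whose columns tend to `0`. Under such a matrix with bounded row sums
`∑ ‖c n k‖`, null sequences go to null sequences, since all but finitely many columns meet small
values of `b`. Conversely, each row is a continuous functional on the Banach space `c₀` of null
sequences, of norm `∑ ‖c n k‖`, so if the transforms of all null sequences are bounded, then the
row sums are bounded by Banach–Steinhaus. -/

open scoped Topology ZeroAtInfty

section Rows

variable {ι κ R : Type*} [NonUnitalSeminormedRing R]

lemma sum_norm_mul_le_sum_norm_mul {s : Finset κ} {c b : κ → R} {D : ℝ}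
    (hb : ∀ k ∈ s, ‖b k‖ ≤ D) : ∑ k ∈ s, ‖c k * b k‖ ≤ (∑ k ∈ s, ‖c k‖) * D := by
  rw [sum_mul]
  exact sum_le_sum fun k hk ↦ norm_mul_le_of_le le_rfl (hb k hk)

lemma tendsto_sum_norm_mul_zero_of_sum_norm_le {l : Filter ι} {s : ι → Finset κ} {c : ι → κ → R}
    {b : κ → R} {C : ℝ} (hC : ∀ i, ∑ k ∈ s i, ‖c i k‖ ≤ C)
    (hc : ∀ k, Tendsto (fun i ↦ c i k) l (𝓝 0)) (hb : Tendsto b cofinite (𝓝 0)) :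
    Tendsto (fun i ↦ ∑ k ∈ s i, ‖c i k * b k‖) l (𝓝 0) := by
  classical
  refine tendsto_order.2 ⟨fun x hx ↦ .of_forall fun i ↦ hx.trans_le (by positivity),
    fun ε hε ↦ ?_⟩
  obtain ⟨δ, hδ, hCδ⟩ := exists_pos_mul_lt hε C
  have hfin : {k | ¬‖b k‖ < δ}.Finite := by
    simpa using hb.norm.eventually_lt_const (by simpa using hδ)
  set T := hfin.toFinset
  have hT : Tendsto (fun i ↦ ∑ k ∈ T, ‖c i k * b k‖) l (𝓝 0) := by
    simpa using tendsto_finsetSum T fun k _ ↦ ((hc k).mul_const (b k)).norm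
  filter_upwards [hT.eventually_lt_const (sub_pos.2 hCδ)] with i hi
  have hhead : ∑ k ∈ s i ∩ T, ‖c i k * b k‖ ≤ ∑ k ∈ T, ‖c i k * b k‖ :=
    sum_le_sum_of_subset_of_nonneg inter_subset_right fun _ _ _ ↦ norm_nonneg _
  have htail : ∑ k ∈ s i \ T, ‖c i k * b k‖ ≤ C * δ :=
    calc ∑ k ∈ s i \ T, ‖c i k * b k‖
      _ ≤ (∑ k ∈ s i \ T, ‖c i k‖) * δ :=
        sum_norm_mul_le_sum_norm_mul fun k hk ↦ by
          have hkT : k ∉ T := (mem_sdiff.1 hk).2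
          exact (not_not.1 (mt hfin.mem_toFinset.2 hkT)).le
      _ ≤ (∑ k ∈ s i, ‖c i k‖) * δ := by gcongr; exact sdiff_subset
      _ ≤ C * δ := by gcongr; exact hC i
  rw [← sum_inter_add_sum_sdiff (s i) T]
  linarith

end Rows

section NullFunctions

variable {ι κ 𝕜 : Type*} [RCLike 𝕜]

/-- The functional `f ↦ ∑ k ∈ s, c k * f k` on `C₀(κ, 𝕜)`. For discrete `κ` it is the functional
that a finite row `c` of a matrix induces on the space of null sequences. -/
noncomputable def rowFunctional [TopologicalSpace κ] (s : Finset κ) (c : κ → 𝕜) :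
    C₀(κ, 𝕜) →L[𝕜] 𝕜 :=
  LinearMap.mkContinuous
    { toFun f := ∑ k ∈ s, c k * f k
      map_add' f g := by simp only [ZeroAtInftyContinuousMap.add_apply, mul_add, sum_add_distrib]
      map_smul' r f := by
        simp only [ZeroAtInftyContinuousMap.smul_apply, smul_eq_mul, mul_left_comm, mul_sum,
          RingHom.id_apply] }
    (∑ k ∈ s, ‖c k‖) fun f ↦ norm_sum_le _ _ |>.trans <|
      sum_norm_mul_le_sum_norm_mul fun k _ ↦ f.toBCF.norm_coe_le_norm k

lemma rowFunctional_apply [TopologicalSpace κ] (s : Finset κ) (c : κ → 𝕜) (f : C₀(κ, 𝕜)) :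
    rowFunctional s c f = ∑ k ∈ s, c k * f k :=
  rfl

lemma norm_rowFunctional [TopologicalSpace κ] [DiscreteTopology κ] (s : Finset κ) (c : κ → 𝕜) :
    ‖rowFunctional s c‖ = ∑ k ∈ s, ‖c k‖ := by
  classical
  refine le_antisymm (LinearMap.mkContinuous_norm_le _ (by positivity) _) ?_
  choose u hu_norm hu using fun k ↦ RCLike.exists_norm_eq_mul_self (c k)
  -- The norm is attained at the phases `u k` of the entries, cut off outside `s`.
  let f : C₀(κ, 𝕜) :=
    { toFun := fun k ↦ if k ∈ s then u k else 0
      continuous_toFun := continuous_of_discreteTopology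
      zero_at_infty' := by
        rw [cocompact_eq_cofinite]
        refine tendsto_nhds_of_eventually_eq ?_
        filter_upwards [s.finite_toSet.compl_mem_cofinite] with k hk
        exact if_neg hk }
  have hf_norm : ‖f‖ ≤ 1 := by
    refine (BoundedContinuousFunction.norm_le zero_le_one).2 fun k ↦ ?_
    change ‖if k ∈ s then u k else 0‖ ≤ 1
    split_ifs
    exacts [(hu_norm k).le, norm_zero.trans_le zero_le_one]
  have hf : rowFunctional s c f = (∑ k ∈ s, ‖c k‖ : ℝ) := by
    rw [rowFunctional_apply, RCLike.ofReal_sum]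
    refine sum_congr rfl fun k hk ↦ ?_
    rw [hu k, mul_comm (u k)]
    exact congrArg (c k * ·) (if_pos hk)
  calc ∑ k ∈ s, ‖c k‖
    _ = ‖rowFunctional s c f‖ := by rw [hf, RCLike.norm_of_nonneg (by positivity)]
    _ ≤ ‖rowFunctional s c‖ := (rowFunctional s c).unit_le_opNorm f hf_norm

lemma exists_forall_sum_norm_le_of_forall_tendsto_zero {s : ι → Finset κ} {c : ι → κ → 𝕜}
    (h : ∀ b : κ → 𝕜, Tendsto b cofinite (𝓝 0) → ∃ C : ℝ, ∀ i, ‖∑ k ∈ s i, c i k * b k‖ ≤ C) :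
    ∃ C : ℝ, ∀ i, ∑ k ∈ s i, ‖c i k‖ ≤ C := by
  let _ : TopologicalSpace κ := ⊥
  have : DiscreteTopology κ := ⟨rfl⟩
  simp only [← norm_rowFunctional]
  refine banach_steinhaus fun f ↦ h f ?_
  simpa only [cocompact_eq_cofinite] using zero_at_infty f

theorem stmt3_general (s : ι → Finset κ) (c : ι → κ → 𝕜)
    (hc : ∀ k, Tendsto (fun i ↦ c i k) cofinite (𝓝 0)) :
    List.TFAE
      [∃ C : ℝ, ∀ i, ∑ k ∈ s i, ‖c i k‖ ≤ C,
       ∀ b : κ → 𝕜, Tendsto b cofinite (𝓝 0) →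
         Tendsto (fun i ↦ ∑ k ∈ s i, ‖c i k * b k‖) cofinite (𝓝 0),
       ∀ b : κ → 𝕜, Tendsto b cofinite (𝓝 0) → ∃ C : ℝ, ∀ i, ‖∑ k ∈ s i, c i k * b k‖ ≤ C,
       ∀ b : κ → 𝕜, (∃ D : ℝ, ∀ k, ‖b k‖ ≤ D) → ∃ C : ℝ, ∀ i, ‖∑ k ∈ s i, c i k * b k‖ ≤ C] := by
  tfae_have 1 → 2 := fun ⟨_, hC⟩ _ hb ↦ tendsto_sum_norm_mul_zero_of_sum_norm_le hC hc hb
  tfae_have 2 → 3 := fun h b hb ↦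
    have ⟨C, hC⟩ := (h b hb).bddAbove_range_of_cofinite
    ⟨C, fun i ↦ (norm_sum_le _ _).trans (hC ⟨i, rfl⟩)⟩
  tfae_have 3 → 1 := exists_forall_sum_norm_le_of_forall_tendsto_zero
  tfae_have 1 → 4 := by
    rintro ⟨C, hC⟩ b ⟨D, hD⟩
    refine ⟨C * |D|, fun i ↦ ?_⟩
    calc ‖∑ k ∈ s i, c i k * b k‖
      _ ≤ ∑ k ∈ s i, ‖c i k * b k‖ := norm_sum_le _ _
      _ ≤ (∑ k ∈ s i, ‖c i k‖) * |D| :=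
        sum_norm_mul_le_sum_norm_mul fun k _ ↦ (hD k).trans (le_abs_self D)
      _ ≤ C * |D| := by gcongr; exact hC i
  tfae_have 4 → 3 := fun h b hb ↦
    have ⟨D, hD⟩ := hb.norm.bddAbove_range_of_cofinite
    h b ⟨D, fun k ↦ hD ⟨k, rfl⟩⟩
  tfae_finish

end NullFunctions

/-- For a complex sequence `(a_k)`, the following are equivalent:
(i) `sup_n (1/n) ∑_{k=1}^n |a_k| < ∞`;
(ii) for every sequence `b_n → 0`, `(1/n) ∑_{k=1}^n |a_k b_k| → 0`;
(iii) for every sequence `b_n → 0`, the sequence `((1/n) ∑_{k=1}^n a_k b_k)_n` is bounded;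
(iv) for every bounded sequence `(b_n)`, the sequence `((1/n) ∑_{k=1}^n a_k b_k)_n` is
bounded. -/
theorem stmt3 (a : ℕ → ℂ) :
    List.TFAE
      [∃ s : ℝ, ∀ n : ℕ, (n : ℝ)⁻¹ * ∑ k ∈ Icc 1 n, ‖a k‖ ≤ s,
       ∀ b : ℕ → ℂ, Tendsto b atTop (nhds 0) →
         Tendsto (fun n : ℕ => (n : ℝ)⁻¹ * ∑ k ∈ Icc 1 n, ‖a k * b k‖) atTop (nhds 0),
       ∀ b : ℕ → ℂ, Tendsto b atTop (nhds 0) →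
         ∃ C : ℝ, ∀ n : ℕ, ‖(n : ℂ)⁻¹ * ∑ k ∈ Icc 1 n, a k * b k‖ ≤ C,
       ∀ b : ℕ → ℂ, (∃ D : ℝ, ∀ k, ‖b k‖ ≤ D) →
         ∃ C : ℝ, ∀ n : ℕ, ‖(n : ℂ)⁻¹ * ∑ k ∈ Icc 1 n, a k * b k‖ ≤ C] := by
  have hcol (k : ℕ) : Tendsto (fun n : ℕ ↦ (n : ℂ)⁻¹ * a k) cofinite (𝓝 0) := by
    simpa only [Nat.cofinite_eq_atTop, zero_mul]
      using tendsto_inv_atTop_nhds_zero_nat.mul_const (a k)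
  simpa only [Nat.cofinite_eq_atTop, mul_sum, norm_mul, norm_inv, Complex.norm_natCast, mul_assoc]
    using stmt3_general (Icc 1) (fun (n : ℕ) k ↦ (n : ℂ)⁻¹ * a k) hcol
end

section
/- Let (a_k)_{k≥1} be a sequence of scalars. Then the following are equivalent: (a) sup_n (1/n)∑_{k=1}^n |a_k| < ∞; (b) for every bounded linear operator T on a (real or complex) Banach space X and every x ∈ X with T^n x → 0 weakly, the averages (1/n)∑_{k=1}^n a_k T^k x converge to 0 weakly; (c) for every bounded linear operator T on a (real or complex) Banach space X and every x ∈ X with ‖T^n x‖ → 0, the averages (1/n)∑_{k=1}^n a_k T^k x converge to 0 in norm. -/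
open Filter Finset

universe u

/-!
If the means of `‖a k‖` are bounded and `v k → 0`, then `a k • v k = o(‖a k‖ + 1)`. As the partial
sums of `‖a k‖ + 1` diverge and are `O(n)`, summation gives `∑ a k • v k = o(n)`. Applied to the
orbit of a stable vector, or to its image under a functional, this is the direct implication.

For the converse, every vector of `c₀` is stable for the left shift, and evaluating at `0` the
averages of the orbit of `c` yields `n⁻¹ * ∑ a k * c k`. These functionals of `c` are pointwise
bounded, hence bounded in norm by Banach–Steinhaus, and their norms are the means of `‖a k‖`.
-/

open Asymptotics
open scoped Topology ZeroAtInfty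

section WeightedAverage

/-- The weighted Cesàro average `n⁻¹ ∑_{k=1}^n a_k v_k`, equal to `0` for `n = 0`. -/
def weightedAverage {𝕜 E : Type*} [DivisionRing 𝕜] [AddCommGroup E] [Module 𝕜 E]
    (a : ℕ → 𝕜) (v : ℕ → E) (n : ℕ) : E :=
  (n : 𝕜)⁻¹ • ∑ k ∈ Icc 1 n, a k • v k

/-- Boundedness of the Cesàro means of the norms, `sup_n n⁻¹ ∑_{k=1}^n ‖a_k‖ < ∞`. -/
def MeanBounded {E : Type*} [Norm E] (a : ℕ → E) : Prop :=
  ∃ s : ℝ, ∀ n : ℕ, (n : ℝ)⁻¹ * ∑ k ∈ Icc 1 n, ‖a k‖ ≤ s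

theorem map_weightedAverage {𝕜 E F G : Type*} [DivisionRing 𝕜] [AddCommGroup E] [Module 𝕜 E]
    [AddCommGroup F] [Module 𝕜 F] [FunLike G E F] [LinearMapClass G 𝕜 E F]
    (f : G) (a : ℕ → 𝕜) (v : ℕ → E) (n : ℕ) :
    f (weightedAverage a v n) = weightedAverage a (fun k => f (v k)) n := by
  simp only [weightedAverage, map_smul, map_sum]

theorem sum_Icc_one_eq_sum_range {M : Type*} [AddCommMonoid M] (f : ℕ → M) (n : ℕ) :
    ∑ k ∈ Icc 1 n, f k = ∑ k ∈ range n, f (k + 1) := by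
  rw [range_eq_Ico, sum_Ico_add' f 0 n 1]
  rfl

theorem MeanBounded.isBigO_sum_norm {E : Type*} [SeminormedAddCommGroup E] {a : ℕ → E}
    (ha : MeanBounded a) :
    (fun n : ℕ => ∑ k ∈ Icc 1 n, ‖a k‖) =O[atTop] fun n : ℕ => (n : ℝ) := by
  obtain ⟨s, hs⟩ := ha
  refine .of_bound s <| (eventually_gt_atTop 0).mono fun n hn => ?_
  rw [Real.norm_of_nonneg (sum_nonneg fun k _ => norm_nonneg (a k)), Real.norm_natCast, mul_comm]
  exact (inv_mul_le_iff₀ (Nat.cast_pos.2 hn)).1 (hs n)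

theorem MeanBounded.isLittleO_sum_smul {𝕜 E : Type*} [NormedField 𝕜] [NormedAddCommGroup E]
    [NormedSpace 𝕜 E] {a : ℕ → 𝕜} (ha : MeanBounded a) {v : ℕ → E}
    (hv : Tendsto v atTop (𝓝 0)) :
    (fun n : ℕ => ∑ k ∈ Icc 1 n, a k • v k) =o[atTop] fun n : ℕ => (n : ℝ) := by
  -- The summand `1` makes the partial sums of the comparison sequence diverge.
  let g : ℕ → ℝ := fun k => ‖a (k + 1)‖ + 1
  have sum_g (n : ℕ) : ∑ k ∈ range n, g k = ∑ k ∈ Icc 1 n, ‖a k‖ + n := by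
    simp [g, sum_add_distrib, sum_Icc_one_eq_sum_range]
  have terms : (fun k => a (k + 1) • v (k + 1)) =o[atTop] g := by
    have hag : (fun k => a (k + 1)) =O[atTop] g := .of_norm_le fun k => by simp [g]
    have hv' : (fun k => v (k + 1)) =o[atTop] fun _ => (1 : ℝ) :=
      (isLittleO_one_iff ℝ).2 (hv.comp (tendsto_add_atTop_nat 1))
    simpa only [smul_eq_mul, mul_one] using hag.smul_isLittleO hv'
  have diverges : Tendsto (fun n => ∑ k ∈ range n, g k) atTop atTop := by
    simp only [sum_g]
    exact tendsto_atTop_mono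
      (fun n => le_add_of_nonneg_left (sum_nonneg fun k _ => norm_nonneg (a k)))
      tendsto_natCast_atTop_atTop
  have linear : (fun n => ∑ k ∈ range n, g k) =O[atTop] fun n : ℕ => (n : ℝ) := by
    simpa only [sum_g] using ha.isBigO_sum_norm.add (isBigO_refl _ _)
  simpa only [sum_Icc_one_eq_sum_range] using
    (terms.sum_range (fun k => by positivity) diverges).trans_isBigO linear

theorem MeanBounded.tendsto_weightedAverage {𝕜 E : Type*} [RCLike 𝕜] [NormedAddCommGroup E]
    [NormedSpace 𝕜 E] {a : ℕ → 𝕜} (ha : MeanBounded a) {v : ℕ → E}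
    (hv : Tendsto v atTop (𝓝 0)) : Tendsto (weightedAverage a v) atTop (𝓝 0) := by
  rw [tendsto_zero_iff_norm_tendsto_zero]
  simpa only [weightedAverage, norm_smul, norm_inv, RCLike.norm_natCast, div_eq_inv_mul] using
    (ha.isLittleO_sum_smul hv).norm_left.tendsto_div_nhds_zero

end WeightedAverage

namespace CZero

variable {𝕜 E : Type*} [NormedField 𝕜] [NormedAddCommGroup E] [NormedSpace 𝕜 E]

theorem norm_le {α : Type*} [TopologicalSpace α] {f : C₀(α, E)} {r : ℝ} (hr : 0 ≤ r) :
    ‖f‖ ≤ r ↔ ∀ x, ‖f x‖ ≤ r :=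
  BoundedContinuousFunction.norm_le (f := f.toBCF) hr

theorem norm_apply_le {α : Type*} [TopologicalSpace α] (f : C₀(α, E)) (x : α) : ‖f x‖ ≤ ‖f‖ :=
  f.toBCF.norm_coe_le_norm x

variable (𝕜 E) in
/-- Evaluation at a point, as a continuous linear map on the space of continuous functions
vanishing at infinity. -/
noncomputable def evalCLM {α : Type*} [TopologicalSpace α] (x : α) : C₀(α, E) →L[𝕜] E :=
  LinearMap.mkContinuous { toFun f := f x, map_add' _ _ := rfl, map_smul' _ _ := rfl } 1
    fun f => by simpa using norm_apply_le f x

@[simp]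
theorem evalCLM_apply {α : Type*} [TopologicalSpace α] (x : α) (f : C₀(α, E)) :
    evalCLM 𝕜 E x f = f x :=
  rfl

variable (𝕜 E) in
/-- The left shift `(c₀, c₁, …) ↦ (c₁, c₂, …)` on null sequences. -/
noncomputable def leftShift : C₀(ℕ, E) →L[𝕜] C₀(ℕ, E) :=
  LinearMap.mkContinuous
    (ZeroAtInftyContinuousMap.compLinearMap
      { toFun := Nat.succ
        continuous_toFun := continuous_of_discreteTopology
        cocompact_tendsto' := by
          simpa only [cocompact_eq_cofinite] using Nat.succ_injective.tendsto_cofinite })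
    1 fun f => by
      rw [one_mul, norm_le (norm_nonneg f)]
      exact fun k => norm_apply_le f (k + 1)

theorem leftShift_apply (c : C₀(ℕ, E)) (m : ℕ) : leftShift 𝕜 E c m = c (m + 1) :=
  rfl

theorem leftShift_pow_apply (k : ℕ) (c : C₀(ℕ, E)) (m : ℕ) :
    (leftShift 𝕜 E ^ k) c m = c (m + k) := by
  induction k generalizing m with
  | zero => rfl
  | succ k ih => rw [pow_succ', mul_apply_eq_comp, leftShift_apply, ih, add_right_comm, add_assoc]

theorem tendsto_leftShift_pow_apply (c : C₀(ℕ, E)) :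
    Tendsto (fun n => (leftShift 𝕜 E ^ n) c) atTop (𝓝 0) := by
  have hc : Tendsto c atTop (𝓝 0) := by
    rw [← Nat.cofinite_eq_atTop, ← cocompact_eq_cofinite]
    exact c.zero_at_infty'
  refine Metric.tendsto_atTop.2 fun ε hε => ?_
  obtain ⟨N, hN⟩ := Metric.tendsto_atTop.1 hc (ε / 2) (half_pos hε)
  refine ⟨N, fun n hn => ?_⟩
  have tail (m : ℕ) : ‖(leftShift 𝕜 E ^ n) c m‖ ≤ ε / 2 := by
    rw [leftShift_pow_apply, ← dist_zero_right]
    exact (hN (m + n) (hn.trans (Nat.le_add_left n m))).le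
  rw [dist_zero_right]
  exact ((norm_le (half_pos hε).le).2 tail).trans_lt (half_lt_self hε)

end CZero

section StableOrbits

variable {𝕜 : Type*} [NontriviallyNormedField 𝕜] {a : ℕ → 𝕜}

/-- The `a`-weighted averages of every stable orbit of `T` tend weakly to `0`. This is implied by
the conclusions for `T` of both the weak and the norm convergence statements. -/
def AveragesStableOrbitsWeakly {X : Type*} [NormedAddCommGroup X] [NormedSpace 𝕜 X]
    (a : ℕ → 𝕜) (T : X →L[𝕜] X) : Prop :=
  ∀ x : X, Tendsto (fun n => (T ^ n) x) atTop (𝓝 0) →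
    ∀ f : X →L[𝕜] 𝕜, Tendsto (fun n => f (weightedAverage a (fun k => (T ^ k) x) n)) atTop (𝓝 0)

theorem AveragesStableOrbitsWeakly.of_conj {X Y : Type*} [NormedAddCommGroup X] [NormedSpace 𝕜 X]
    [NormedAddCommGroup Y] [NormedSpace 𝕜 Y] (e : X ≃L[𝕜] Y) {T : X →L[𝕜] X}
    (h : AveragesStableOrbitsWeakly a (e.conjContinuousAlgEquiv T)) :
    AveragesStableOrbitsWeakly a T := by
  have conj_pow (n : ℕ) (x : X) : (e.conjContinuousAlgEquiv T ^ n) (e x) = e ((T ^ n) x) := by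
    rw [← map_pow, ContinuousLinearEquiv.conjContinuousAlgEquiv_apply_apply, e.symm_apply_apply]
  intro x hx f
  have stable : Tendsto (fun n => (e.conjContinuousAlgEquiv T ^ n) (e x)) atTop (𝓝 0) := by
    simpa only [conj_pow, e.map_zero, Function.comp_def] using (e.continuous.tendsto 0).comp hx
  simpa only [map_weightedAverage, conj_pow, ContinuousLinearMap.comp_apply,
    ContinuousLinearEquiv.coe_coe, e.symm_apply_apply] using h (e x) stable (f ∘L e.symm)

end StableOrbits

section Converse

open CZero

variable {𝕜 : Type*} [RCLike 𝕜] {a : ℕ → 𝕜}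

theorem sum_norm_le_norm_sum_smul_evalCLM {α : Type*} [TopologicalSpace α] [DiscreteTopology α]
    (s : Finset α) (a : α → 𝕜) :
    ∑ k ∈ s, ‖a k‖ ≤ ‖∑ k ∈ s, a k • evalCLM 𝕜 𝕜 k‖ := by
  classical
  choose φ norm_φ mul_φ using fun k => RCLike.exists_norm_eq_mul_self (a k)
  have support : HasCompactSupport fun k => if k ∈ s then φ k else 0 :=
    .of_support_subset_isCompact s.finite_toSet.isCompact fun k hk => by
      by_contra h
      exact hk (if_neg h)
  let c : C₀(α, 𝕜) := ⟨⟨_, continuous_of_discreteTopology⟩, support.is_zero_at_infty⟩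
  have norm_c : ‖c‖ ≤ 1 := (norm_le zero_le_one).2 fun k => by
    change ‖if k ∈ s then φ k else 0‖ ≤ 1
    split_ifs <;> simp [norm_φ]
  have value : (∑ k ∈ s, a k • evalCLM 𝕜 𝕜 k) c = ((∑ k ∈ s, ‖a k‖ : ℝ) : 𝕜) := by
    simp only [_root_.sum_apply, smul_apply, evalCLM_apply, RCLike.ofReal_sum]
    refine sum_congr rfl fun k hk => ?_
    change a k * (if k ∈ s then φ k else 0) = _
    rw [if_pos hk, mul_φ, mul_comm]
  calc ∑ k ∈ s, ‖a k‖ = ‖(∑ k ∈ s, a k • evalCLM 𝕜 𝕜 k) c‖ := by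
        rw [value, RCLike.norm_ofReal, abs_of_nonneg (sum_nonneg fun k _ => norm_nonneg (a k))]
    _ ≤ ‖∑ k ∈ s, a k • evalCLM 𝕜 𝕜 k‖ := ContinuousLinearMap.unit_le_opNorm _ c norm_c

theorem MeanBounded.of_bounded_weightedAverage
    (h : ∀ c : C₀(ℕ, 𝕜), ∃ C, ∀ n, ‖weightedAverage a c n‖ ≤ C) : MeanBounded a := by
  have apply_eq (n : ℕ) (c : C₀(ℕ, 𝕜)) :
      weightedAverage a (evalCLM 𝕜 𝕜) n c = weightedAverage a c n := by
    simp [weightedAverage]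
  obtain ⟨s, hs⟩ := banach_steinhaus (g := weightedAverage a (evalCLM 𝕜 𝕜))
    (by simpa only [apply_eq] using h)
  refine ⟨s, fun n => le_trans ?_ (hs n)⟩
  rw [weightedAverage, norm_smul, norm_inv, RCLike.norm_natCast]
  gcongr
  exact sum_norm_le_norm_sum_smul_evalCLM (Icc 1 n) a

theorem MeanBounded.of_averagesStableOrbitsWeakly_leftShift
    (h : AveragesStableOrbitsWeakly a (leftShift 𝕜 𝕜)) : MeanBounded a := by
  refine .of_bounded_weightedAverage fun c => ?_
  have lim : Tendsto (weightedAverage a c) atTop (𝓝 0) := by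
    simpa only [map_weightedAverage, evalCLM_apply, leftShift_pow_apply, zero_add] using
      h c (tendsto_leftShift_pow_apply c) (evalCLM 𝕜 𝕜 0)
  simpa using (Metric.isBounded_range_of_tendsto _ lim).exists_norm_le

theorem small_rclike (𝕜 : Type*) [RCLike 𝕜] : Small.{u} 𝕜 :=
  small_of_injective (f := fun z : 𝕜 => (RCLike.re z, RCLike.im z)) fun _ _ h =>
    RCLike.ext (congrArg Prod.fst h) (congrArg Prod.snd h)

theorem MeanBounded.of_forall_averagesStableOrbitsWeakly
    (h : ∀ (X : Type u) (_ : NormedAddCommGroup X) (_ : NormedSpace 𝕜 X) (_ : CompleteSpace X)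
      (T : X →L[𝕜] X), AveragesStableOrbitsWeakly a T) : MeanBounded a := by
  -- `C₀(ℕ, 𝕜)` lives in the universe of `𝕜`, so the shift is transported to a copy in `Type u`.
  have : Small.{u} 𝕜 := small_rclike 𝕜
  have : Small.{u} C₀(ℕ, 𝕜) := small_of_injective DFunLike.coe_injective
  let e : C₀(ℕ, 𝕜) ≃L[𝕜] Shrink.{u} C₀(ℕ, 𝕜) := (Shrink.continuousLinearEquiv 𝕜 C₀(ℕ, 𝕜)).symm
  have complete : CompleteSpace (Shrink.{u} C₀(ℕ, 𝕜)) :=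
    (completeSpace_congr e.isUniformEmbedding).1 inferInstance
  exact .of_averagesStableOrbitsWeakly_leftShift ((h _ _ _ complete _).of_conj e)

end Converse

/-- For a sequence of scalars `(a_k)`, the following are equivalent:
(a) `sup_n (1/n) ∑_{k=1}^n |a_k| < ∞`;
(b) for every bounded operator `T` on a Banach space `X` and every `x` with `T^n x → 0` weakly,
`(1/n) ∑_{k=1}^n a_k T^k x → 0` weakly;
(c) for every bounded operator `T` on a Banach space `X` and every `x` with `‖T^n x‖ → 0`,
`(1/n) ∑_{k=1}^n a_k T^k x → 0` in norm. -/
theorem stmt4 {𝕜 : Type*} [RCLike 𝕜] (a : ℕ → 𝕜) :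
    ((∃ s : ℝ, ∀ n : ℕ, (n : ℝ)⁻¹ * ∑ k ∈ Icc 1 n, ‖a k‖ ≤ s) ↔
      (∀ (X : Type u) (_ : NormedAddCommGroup X) (_ : NormedSpace 𝕜 X) (_ : CompleteSpace X)
        (T : X →L[𝕜] X) (x : X),
        (∀ f : X →L[𝕜] 𝕜, Tendsto (fun n : ℕ => f ((T ^ n) x)) atTop (nhds 0)) →
        ∀ f : X →L[𝕜] 𝕜,
          Tendsto (fun n : ℕ => f ((n : 𝕜)⁻¹ • ∑ k ∈ Icc 1 n, a k • (T ^ k) x))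
            atTop (nhds 0))) ∧
    ((∃ s : ℝ, ∀ n : ℕ, (n : ℝ)⁻¹ * ∑ k ∈ Icc 1 n, ‖a k‖ ≤ s) ↔
      (∀ (X : Type u) (_ : NormedAddCommGroup X) (_ : NormedSpace 𝕜 X) (_ : CompleteSpace X)
        (T : X →L[𝕜] X) (x : X),
        Tendsto (fun n : ℕ => ‖(T ^ n) x‖) atTop (nhds 0) →
        Tendsto (fun n : ℕ => (n : 𝕜)⁻¹ • ∑ k ∈ Icc 1 n, a k • (T ^ k) x)
          atTop (nhds 0))) := by
  refine ⟨⟨fun ha X _ _ _ T x hx f => ?_, fun h => ?_⟩, ⟨fun ha X _ _ _ T x hx => ?_, fun h => ?_⟩⟩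
  · exact (MeanBounded.tendsto_weightedAverage ha (hx f)).congr fun n =>
      (map_weightedAverage f a (fun k => (T ^ k) x) n).symm
  · refine MeanBounded.of_forall_averagesStableOrbitsWeakly.{u} fun X _ _ _ T x hx => ?_
    exact h X _ _ ‹_› T x fun g => g.map_zero ▸ (g.continuous.tendsto 0).comp hx
  · exact MeanBounded.tendsto_weightedAverage ha (tendsto_zero_iff_norm_tendsto_zero.2 hx)
  · refine MeanBounded.of_forall_averagesStableOrbitsWeakly.{u} fun X _ _ _ T x hx f => ?_
    exact f.map_zero ▸
      (f.continuous.tendsto 0).comp (h X _ _ ‹_› T x (tendsto_zero_iff_norm_tendsto_zero.1 hx))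
end

section
/- Let (a_k)_{k≥1} be a sequence of scalars satisfying sup_n (1/n)∑_{k=1}^n |a_k| < ∞ and |a_k| = o(k). Then for every contraction T on a (real or complex) Hilbert space H and every x ∈ H with T^n x → 0 weakly, one has lim_n ‖(1/n)∑_{k=1}^n a_k T^k x‖ = 0. -/
open Filter Finset

/-!
Expanding the square, `‖∑ a_k T^k x‖²` is at most `∑ |a_k| |a_l| |⟪T^k x, T^l x⟫|`. The correlations
`⟪T^(k+j) x, T^k x⟫` tend to `0` as `j → ∞` uniformly in `k`: for each fixed `k` this is weak
convergence, and since `‖T^k x‖` converges, `T` is asymptotically isometric along the orbit, so the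
correlations hardly change from some `k` on. Hence, up to a small multiple of `(∑ |a_k|)²`, only the
pairs in a band `|k - l| < N` of fixed width matter, and these contribute
`O(∑ |a_k| · max_{k ≤ n} |a_k|) = o(n²)`.
-/

open Asymptotics
open scoped Topology InnerProductSpace

lemma isLittleO_partialSups {b g : ℕ → ℝ} (hg : Monotone g) (hg_top : Tendsto g atTop atTop)
    (hb : b =o[atTop] g) : partialSups b =o[atTop] g := by
  refine isLittleO_iff.2 fun δ hδ ↦ ?_
  obtain ⟨M, hM⟩ := eventually_atTop.1 ((hb.bound hδ).and (hg_top.eventually_ge_atTop 0))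
  have htail : ∀ k, M ≤ k → |b k| ≤ δ * g k := fun k hk ↦ by
    simpa [abs_of_nonneg (hM k hk).2] using (hM k hk).1
  have hinit : ∀ᶠ n in atTop, partialSups b M ≤ δ * g n :=
    (hg_top.const_mul_atTop hδ).eventually_ge_atTop _
  filter_upwards [hinit, eventually_ge_atTop M] with n hn hMn
  have hupper : partialSups b n ≤ δ * g n := by
    refine partialSups_le _ _ _ fun k hk ↦ ?_
    obtain hkM | hMk := le_total k M
    · exact (le_partialSups_of_le b hkM).trans hn
    · calc b k ≤ δ * g k := (le_abs_self _).trans (htail k hMk)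
        _ ≤ δ * g n := by gcongr; exact hg hk
  have hlower : -(δ * g n) ≤ partialSups b n :=
    (neg_le_of_abs_le (htail n hMn)).trans (le_partialSups b n)
  rw [Real.norm_eq_abs, Real.norm_of_nonneg (hM n hMn).2]
  exact abs_le.2 ⟨hlower, hupper⟩

lemma sum_mul_le_of_card_le {ι : Type*} {s : Finset ι} {b w : ι → ℝ} {ε d B : ℝ} {m : ℕ}
    (hb : ∀ i ∈ s, 0 ≤ b i) (hbd : ∀ i ∈ s, b i ≤ d) (hwB : ∀ i ∈ s, w i ≤ B) (hε : 0 ≤ ε)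
    (hd : 0 ≤ d) (hB : 0 ≤ B) (hm : #{i ∈ s | ε < w i} ≤ m) :
    ∑ i ∈ s, b i * w i ≤ ε * ∑ i ∈ s, b i + m * (d * B) := by
  have hterm : ∀ i ∈ s, b i * w i ≤ ε * b i + if ε < w i then d * B else 0 := by
    intro i hi
    split_ifs with hw
    · have hbw : b i * w i ≤ d * B :=
        mul_le_mul (hbd i hi) (hwB i hi) (hε.trans hw.le) hd
      linarith [mul_nonneg hε (hb i hi)]
    · linarith [mul_le_mul_of_nonneg_left (not_lt.1 hw) (hb i hi)]
  calc ∑ i ∈ s, b i * w i ≤ ∑ i ∈ s, (ε * b i + if ε < w i then d * B else 0) :=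
        sum_le_sum hterm
    _ = ε * ∑ i ∈ s, b i + #{i ∈ s | ε < w i} * (d * B) := by
        rw [sum_add_distrib, ← mul_sum, ← sum_filter, sum_const, nsmul_eq_mul]
    _ ≤ ε * ∑ i ∈ s, b i + m * (d * B) := by gcongr

section InnerProduct

variable {𝕜 : Type*} [RCLike 𝕜] {E : Type*} [SeminormedAddCommGroup E] [InnerProductSpace 𝕜 E]

lemma norm_sum_smul_sq_le {ι : Type*} (s : Finset ι) (a : ι → 𝕜) (u : ι → E) :
    ‖∑ i ∈ s, a i • u i‖ ^ 2 ≤ ∑ i ∈ s, ‖a i‖ * ∑ j ∈ s, ‖a j‖ * ‖⟪u i, u j⟫_𝕜‖ :=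
  calc ‖∑ i ∈ s, a i • u i‖ ^ 2 = ‖∑ i ∈ s, ∑ j ∈ s, ⟪a i • u i, a j • u j⟫_𝕜‖ := by
        simp_rw [← inner_sum, ← sum_inner, inner_self_eq_norm_sq_to_K, norm_pow, norm_algebraMap',
          norm_norm]
    _ ≤ ∑ i ∈ s, ∑ j ∈ s, ‖⟪a i • u i, a j • u j⟫_𝕜‖ :=
        (norm_sum_le _ _).trans (sum_le_sum fun _ _ ↦ norm_sum_le _ _)
    _ = ∑ i ∈ s, ‖a i‖ * ∑ j ∈ s, ‖a j‖ * ‖⟪u i, u j⟫_𝕜‖ := by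
        simp_rw [inner_smul_left, inner_smul_right, norm_mul, RCLike.norm_conj, mul_sum]

lemma card_filter_lt_norm_inner_le {u : ℕ → E} {ε : ℝ} {N : ℕ}
    (hu : ∀ j, N ≤ j → ∀ k, ‖⟪u (k + j), u k⟫_𝕜‖ ≤ ε) (s : Finset ℕ) (k : ℕ) :
    #{l ∈ s | ε < ‖⟪u k, u l⟫_𝕜‖} ≤ 2 * N := by
  have hsub : {l ∈ s | ε < ‖⟪u k, u l⟫_𝕜‖} ⊆ Ico (k + 1 - N) (k + N) := by
    intro l hl
    have hlt := (mem_filter.1 hl).2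
    rw [mem_Ico]
    by_contra! hout
    obtain hlk | hkl : l + N ≤ k ∨ k + N ≤ l := by omega
    · obtain ⟨j, rfl⟩ := Nat.exists_eq_add_of_le hlk
      exact hlt.not_ge (add_assoc l N j ▸ hu (N + j) (Nat.le_add_right N j) l)
    · obtain ⟨j, rfl⟩ := Nat.exists_eq_add_of_le hkl
      rw [norm_inner_symm] at hlt
      exact hlt.not_ge (add_assoc k N j ▸ hu (N + j) (Nat.le_add_right N j) k)
  calc #{l ∈ s | ε < ‖⟪u k, u l⟫_𝕜‖} ≤ #(Ico (k + 1 - N) (k + N)) := card_le_card hsub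
    _ ≤ 2 * N := by rw [Nat.card_Ico]; omega

lemma norm_sum_smul_sq_le_of_norm_inner_le {u : ℕ → E} {R ε d : ℝ} {N : ℕ} {s : Finset ℕ}
    {a : ℕ → 𝕜} (hR : ∀ k, ‖u k‖ ≤ R) (hε : 0 ≤ ε)
    (hu : ∀ j, N ≤ j → ∀ k, ‖⟪u (k + j), u k⟫_𝕜‖ ≤ ε) (hd : 0 ≤ d) (had : ∀ k ∈ s, ‖a k‖ ≤ d) :
    ‖∑ k ∈ s, a k • u k‖ ^ 2 ≤
      (∑ k ∈ s, ‖a k‖) * (ε * ∑ k ∈ s, ‖a k‖ + 2 * N * (d * R ^ 2)) := by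
  have hinner : ∀ k l, ‖⟪u k, u l⟫_𝕜‖ ≤ R ^ 2 := fun k l ↦
    calc ‖⟪u k, u l⟫_𝕜‖ ≤ ‖u k‖ * ‖u l‖ := norm_inner_le_norm _ _
      _ ≤ R * R := mul_le_mul (hR k) (hR l) (norm_nonneg _) ((norm_nonneg _).trans (hR k))
      _ = R ^ 2 := (sq R).symm
  have hrow : ∀ k, ∑ l ∈ s, ‖a l‖ * ‖⟪u k, u l⟫_𝕜‖ ≤
      ε * ∑ l ∈ s, ‖a l‖ + 2 * N * (d * R ^ 2) := fun k ↦ by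
    exact_mod_cast sum_mul_le_of_card_le (fun l _ ↦ norm_nonneg (a l)) had (fun l _ ↦ hinner k l)
      hε hd (sq_nonneg R) (card_filter_lt_norm_inner_le hu s k)
  calc ‖∑ k ∈ s, a k • u k‖ ^ 2
      ≤ ∑ k ∈ s, ‖a k‖ * ∑ l ∈ s, ‖a l‖ * ‖⟪u k, u l⟫_𝕜‖ := norm_sum_smul_sq_le s a u
    _ ≤ ∑ k ∈ s, ‖a k‖ * (ε * ∑ l ∈ s, ‖a l‖ + 2 * N * (d * R ^ 2)) := by
        gcongr with k; exact hrow k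
    _ = _ := (sum_mul ..).symm

lemma norm_average_smul_sq_le_of_norm_inner_le {u : ℕ → E} {R ε C d : ℝ} {N n : ℕ} {a : ℕ → 𝕜}
    (hR : ∀ k, ‖u k‖ ≤ R) (hε : 0 ≤ ε) (hu : ∀ j, N ≤ j → ∀ k, ‖⟪u (k + j), u k⟫_𝕜‖ ≤ ε)
    (hC : (n : ℝ)⁻¹ * ∑ k ∈ Icc 1 n, ‖a k‖ ≤ C) (hd : 0 ≤ d) (had : ∀ k ∈ Icc 1 n, ‖a k‖ ≤ d) :
    ‖(n : 𝕜)⁻¹ • ∑ k ∈ Icc 1 n, a k • u k‖ ^ 2 ≤ C * (ε * C + 2 * N * (d / n * R ^ 2)) := by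
  have hsum := norm_sum_smul_sq_le_of_norm_inner_le hR hε hu hd had
  set A := ∑ k ∈ Icc 1 n, ‖a k‖
  have hA : 0 ≤ (n : ℝ)⁻¹ * A := by positivity
  have hC0 : 0 ≤ C := hA.trans hC
  calc ‖(n : 𝕜)⁻¹ • ∑ k ∈ Icc 1 n, a k • u k‖ ^ 2
      = (n : ℝ)⁻¹ ^ 2 * ‖∑ k ∈ Icc 1 n, a k • u k‖ ^ 2 := by
        rw [norm_smul, mul_pow, norm_inv, RCLike.norm_natCast]
    _ ≤ (n : ℝ)⁻¹ ^ 2 * (A * (ε * A + 2 * N * (d * R ^ 2))) := by gcongr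
    _ = ((n : ℝ)⁻¹ * A) * (ε * ((n : ℝ)⁻¹ * A) + 2 * N * (d / n * R ^ 2)) := by ring
    _ ≤ C * (ε * C + 2 * N * (d / n * R ^ 2)) := by gcongr

theorem tendsto_norm_average_smul_of_tendstoUniformly_inner {u : ℕ → E} {R : ℝ}
    (hR : ∀ k, ‖u k‖ ≤ R) (hu : TendstoUniformly (fun j k ↦ ⟪u (k + j), u k⟫_𝕜) 0 atTop)
    {a : ℕ → 𝕜} {C : ℝ} (hC : ∀ n : ℕ, (n : ℝ)⁻¹ * ∑ k ∈ Icc 1 n, ‖a k‖ ≤ C)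
    (ha : (fun k ↦ ‖a k‖) =o[atTop] fun k ↦ (k : ℝ)) :
    Tendsto (fun n : ℕ ↦ ‖(n : 𝕜)⁻¹ • ∑ k ∈ Icc 1 n, a k • u k‖) atTop (𝓝 0) := by
  set M := partialSups fun k ↦ ‖a k‖
  have hM : Tendsto (fun n : ℕ ↦ M n / n) atTop (𝓝 0) :=
    (isLittleO_partialSups Nat.mono_cast tendsto_natCast_atTop_atTop ha).tendsto_div_nhds_zero
  suffices hsq : Tendsto (fun n : ℕ ↦ ‖(n : 𝕜)⁻¹ • ∑ k ∈ Icc 1 n, a k • u k‖ ^ 2) atTop (𝓝 0) by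
    simpa using hsq.sqrt
  refine tendsto_order.2 ⟨fun η hη ↦ .of_forall fun n ↦ hη.trans_le (sq_nonneg _), fun η hη ↦ ?_⟩
  obtain ⟨ε, hε, hεη⟩ : ∃ ε > 0, C * (ε * C) < η := by
    refine ⟨η / (C ^ 2 + 1), by positivity, ?_⟩
    calc C * (η / (C ^ 2 + 1) * C) = η * (C ^ 2 / (C ^ 2 + 1)) := by ring
      _ < η := mul_lt_of_lt_one_right hη ((div_lt_one (by positivity)).2 (lt_add_one _))
  obtain ⟨N, hN⟩ := eventually_atTop.1 (Metric.tendstoUniformly_iff.1 hu ε hε)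
  simp only [Pi.zero_apply, dist_zero_left] at hN
  have hbound : ∀ n : ℕ, ‖(n : 𝕜)⁻¹ • ∑ k ∈ Icc 1 n, a k • u k‖ ^ 2 ≤
      C * (ε * C + 2 * N * (M n / n * R ^ 2)) := fun n ↦
    norm_average_smul_sq_le_of_norm_inner_le hR hε.le (fun j hj k ↦ (hN j hj k).le) (hC n)
      ((norm_nonneg (a n)).trans (le_partialSups (fun k ↦ ‖a k‖) n))
      (fun k hk ↦ le_partialSups_of_le (fun k ↦ ‖a k‖) (mem_Icc.1 hk).2)
  have hlim : Tendsto (fun n : ℕ ↦ C * (ε * C + 2 * N * (M n / n * R ^ 2))) atTop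
      (𝓝 (C * (ε * C))) := by
    simpa using (((hM.mul_const (R ^ 2)).const_mul (2 * N : ℝ)).const_add (ε * C)).const_mul C
  filter_upwards [hlim.eventually_lt_const hεη] with n hn using (hbound n).trans_lt hn

variable {F : Type*} [SeminormedAddCommGroup F] [InnerProductSpace 𝕜 F]

/-- The positive semidefinite form `⟪u, v⟫ - ⟪S u, S v⟫`, i.e. the one of the defect operator
`1 - S† S` of a contraction `S`. Cauchy–Schwarz for it bounds how far `S` is from preserving
inner products. It is encoded as a form, without the adjoint. -/
abbrev defectCore (S : E →L[𝕜] F) (hS : ‖S‖ ≤ 1) : PreInnerProductSpace.Core 𝕜 E where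
  inner u v := ⟪u, v⟫_𝕜 - ⟪S u, S v⟫_𝕜
  conj_inner_symm u v := by simp only [map_sub, inner_conj_symm]
  re_inner_nonneg u := by
    have hSu : ‖S u‖ ≤ ‖u‖ := by simpa using S.le_of_opNorm_le hS u
    rw [map_sub, inner_self_eq_norm_sq, inner_self_eq_norm_sq, sub_nonneg]
    gcongr
  add_left u v w := by simp only [map_add, inner_add_left]; ring
  smul_left u v c := by simp only [map_smul, inner_smul_left]; ring

lemma norm_inner_sub_inner_map_sq_le (S : E →L[𝕜] F) (hS : ‖S‖ ≤ 1) (u v : E) :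
    ‖⟪u, v⟫_𝕜 - ⟪S u, S v⟫_𝕜‖ ^ 2 ≤ (‖u‖ ^ 2 - ‖S u‖ ^ 2) * (‖v‖ ^ 2 - ‖S v‖ ^ 2) := by
  have hcs := @InnerProductSpace.Core.inner_mul_inner_self_le 𝕜 E _ _ _ (defectCore S hS) u v
  have hsymm : ‖⟪v, u⟫_𝕜 - ⟪S v, S u⟫_𝕜‖ = ‖⟪u, v⟫_𝕜 - ⟪S u, S v⟫_𝕜‖ := by
    rw [← RCLike.norm_conj, map_sub, inner_conj_symm, inner_conj_symm]
  change ‖⟪u, v⟫_𝕜 - ⟪S u, S v⟫_𝕜‖ * ‖⟪v, u⟫_𝕜 - ⟪S v, S u⟫_𝕜‖ ≤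
    RCLike.re (⟪u, u⟫_𝕜 - ⟪S u, S u⟫_𝕜) * RCLike.re (⟪v, v⟫_𝕜 - ⟪S v, S v⟫_𝕜) at hcs
  simpa only [hsymm, map_sub, inner_self_eq_norm_sq, ← sq] using hcs

variable {T : E →L[𝕜] E}

lemma norm_pow_le_one_of_norm_le_one (hT : ‖T‖ ≤ 1) (n : ℕ) : ‖T ^ n‖ ≤ 1 := by
  induction n with
  | zero => exact ContinuousLinearMap.norm_id_le
  | succ n ih =>
    rw [pow_succ]
    exact (norm_mul_le _ _).trans (mul_le_one₀ ih (norm_nonneg _) hT)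

lemma norm_pow_apply_le (hT : ‖T‖ ≤ 1) (n : ℕ) (x : E) : ‖(T ^ n) x‖ ≤ ‖x‖ := by
  simpa using (T ^ n).le_of_opNorm_le (norm_pow_le_one_of_norm_le_one hT n) x

lemma cauchySeq_norm_pow_apply_sq (hT : ‖T‖ ≤ 1) (x : E) :
    CauchySeq fun n ↦ ‖(T ^ n) x‖ ^ 2 := by
  have hanti : Antitone fun n ↦ ‖(T ^ n) x‖ ^ 2 := antitone_nat_of_succ_le fun n ↦ by
    have hstep : ‖(T ^ (n + 1)) x‖ ≤ ‖(T ^ n) x‖ := by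
      simpa [pow_succ'] using T.le_of_opNorm_le hT ((T ^ n) x)
    gcongr
  exact (tendsto_atTop_ciInf hanti ⟨0, by rintro _ ⟨n, rfl⟩; positivity⟩).cauchySeq

lemma norm_inner_pow_apply_sub_sq_le (hT : ‖T‖ ≤ 1) (x : E) (j k m : ℕ) :
    ‖⟪(T ^ (k + j)) x, (T ^ k) x⟫_𝕜 - ⟪(T ^ (k + m + j)) x, (T ^ (k + m)) x⟫_𝕜‖ ^ 2 ≤
      ‖x‖ ^ 2 * (‖(T ^ k) x‖ ^ 2 - ‖(T ^ (k + m)) x‖ ^ 2) := by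
  have hshift : ∀ i, (T ^ m) ((T ^ i) x) = (T ^ (i + m)) x := fun i ↦ by
    rw [add_comm i m, pow_add]; rfl
  have hnonneg : 0 ≤ ‖(T ^ k) x‖ ^ 2 - ‖(T ^ (k + m)) x‖ ^ 2 := by
    rw [sub_nonneg, ← hshift k]
    gcongr
    exact norm_pow_apply_le hT m _
  have hdefect := norm_inner_sub_inner_map_sq_le (T ^ m) (norm_pow_le_one_of_norm_le_one hT m)
    ((T ^ (k + j)) x) ((T ^ k) x)
  rw [hshift, hshift, add_right_comm] at hdefect
  refine hdefect.trans (mul_le_mul_of_nonneg_right ?_ hnonneg)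
  calc _ ≤ ‖(T ^ (k + j)) x‖ ^ 2 := sub_le_self _ (sq_nonneg _)
    _ ≤ ‖x‖ ^ 2 := by gcongr; exact norm_pow_apply_le hT _ x

lemma exists_forall_norm_inner_pow_apply_sub_le (hT : ‖T‖ ≤ 1) (x : E) {ε : ℝ} (hε : 0 < ε) :
    ∃ k, ∀ j m, ‖⟪(T ^ (k + j)) x, (T ^ k) x⟫_𝕜 -
      ⟪(T ^ (k + m + j)) x, (T ^ (k + m)) x⟫_𝕜‖ ≤ ε := by
  set r := (ε / (‖x‖ + 1)) ^ 2 with hr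
  obtain ⟨k, hk⟩ := Metric.cauchySeq_iff'.1 (cauchySeq_norm_pow_apply_sq hT x) r (by positivity)
  refine ⟨k, fun j m ↦ (sq_le_sq₀ (norm_nonneg _) hε.le).1 ?_⟩
  have henergy : ‖(T ^ k) x‖ ^ 2 - ‖(T ^ (k + m)) x‖ ^ 2 ≤ r := by
    have hdist := hk (k + m) (Nat.le_add_right k m)
    rw [dist_comm, Real.dist_eq] at hdist
    exact (le_abs_self _).trans hdist.le
  calc _ ≤ ‖x‖ ^ 2 * (‖(T ^ k) x‖ ^ 2 - ‖(T ^ (k + m)) x‖ ^ 2) :=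
        norm_inner_pow_apply_sub_sq_le hT x j k m
    _ ≤ ‖x‖ ^ 2 * r := by gcongr
    _ ≤ (‖x‖ + 1) ^ 2 * r := by gcongr; exact le_add_of_nonneg_right zero_le_one
    _ = ε ^ 2 := by rw [hr]; field_simp

theorem tendstoUniformly_inner_pow_apply (hT : ‖T‖ ≤ 1) {x : E}
    (hx : ∀ m, Tendsto (fun n : ℕ ↦ ⟪(T ^ n) x, (T ^ m) x⟫_𝕜) atTop (𝓝 0)) :
    TendstoUniformly (fun j k ↦ ⟪(T ^ (k + j)) x, (T ^ k) x⟫_𝕜) 0 atTop := by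
  refine Metric.tendstoUniformly_iff.2 fun ε hε ↦ ?_
  simp only [Pi.zero_apply, dist_zero_left]
  obtain ⟨K, htail⟩ := exists_forall_norm_inner_pow_apply_sub_le hT x (half_pos hε)
  have hhead : ∀ᶠ j in atTop, ∀ k ∈ range (K + 1),
      ‖⟪(T ^ (k + j)) x, (T ^ k) x⟫_𝕜‖ < ε / 2 := by
    refine (eventually_all_finset _).2 fun k _ ↦ ?_
    have hk := ((hx k).comp (tendsto_add_atTop_nat k)).norm
    simp only [Function.comp_def, add_comm _ k, norm_zero] at hk
    exact hk.eventually_lt_const (half_pos hε)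
  filter_upwards [hhead] with j hj k
  obtain hkK | hKk := lt_or_ge k (K + 1)
  · exact (hj k (mem_range.2 hkK)).trans (half_lt_self hε)
  · obtain ⟨m, rfl⟩ := Nat.exists_eq_add_of_le (Nat.le_of_succ_le hKk)
    calc ‖⟪(T ^ (K + m + j)) x, (T ^ (K + m)) x⟫_𝕜‖
        ≤ ‖⟪(T ^ (K + j)) x, (T ^ K) x⟫_𝕜‖ + ‖⟪(T ^ (K + j)) x, (T ^ K) x⟫_𝕜 -
            ⟪(T ^ (K + m + j)) x, (T ^ (K + m)) x⟫_𝕜‖ := norm_le_norm_add_norm_sub _ _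
      _ < ε / 2 + ε / 2 := add_lt_add_of_lt_of_le (hj K (self_mem_range_succ K)) (htail j m)
      _ = ε := add_halves ε

end InnerProduct

theorem stmt5_general {𝕜 : Type*} [RCLike 𝕜] {H : Type*} [SeminormedAddCommGroup H]
    [InnerProductSpace 𝕜 H]
    (a : ℕ → 𝕜)
    (ha_bdd : ∃ C : ℝ, ∀ n : ℕ, (n : ℝ)⁻¹ * ∑ k ∈ Icc 1 n, ‖a k‖ ≤ C)
    (ha_o : Tendsto (fun k : ℕ => ‖a k‖ / (k : ℝ)) atTop (nhds 0))
    (T : H →L[𝕜] H) (hT : ‖T‖ ≤ 1) (x : H)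
    (hx : ∀ m, Tendsto (fun n : ℕ => (inner 𝕜 ((T ^ n) x) ((T ^ m) x) : 𝕜)) atTop (nhds 0)) :
    Tendsto (fun n : ℕ => ‖(n : 𝕜)⁻¹ • ∑ k ∈ Icc 1 n, a k • (T ^ k) x‖) atTop (nhds 0) := by
  obtain ⟨C, hC⟩ := ha_bdd
  have ha : (fun k ↦ ‖a k‖) =o[atTop] fun k ↦ (k : ℝ) := by
    refine (isLittleO_iff_tendsto' ?_).2 ha_o
    filter_upwards [eventually_ne_atTop 0] with k hk hk0
    exact absurd hk0 (Nat.cast_ne_zero.2 hk)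
  exact tendsto_norm_average_smul_of_tendstoUniformly_inner (fun k ↦ norm_pow_apply_le hT k x)
    (tendstoUniformly_inner_pow_apply hT hx) hC ha

/-- Let `(a_k)` be scalars with `sup_n (1/n) ∑_{k=1}^n |a_k| < ∞` and
`|a_k| = o(k)`. Then for every contraction `T` on a (real or complex) Hilbert space `H` and
every `x ∈ H` with `T^n x → 0` weakly, `lim_n ‖(1/n) ∑_{k=1}^n a_k T^k x‖ = 0`. -/
theorem stmt5 {𝕜 : Type*} [RCLike 𝕜] {H : Type*} [NormedAddCommGroup H]
    [InnerProductSpace 𝕜 H] [CompleteSpace H]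
    (a : ℕ → 𝕜)
    (ha_bdd : ∃ C : ℝ, ∀ n : ℕ, (n : ℝ)⁻¹ * ∑ k ∈ Icc 1 n, ‖a k‖ ≤ C)
    (ha_o : Tendsto (fun k : ℕ => ‖a k‖ / (k : ℝ)) atTop (nhds 0))
    (T : H →L[𝕜] H) (hT : ‖T‖ ≤ 1) (x : H)
    (hx : ∀ y : H, Tendsto (fun n : ℕ => (inner 𝕜 ((T ^ n) x) y : 𝕜)) atTop (nhds 0)) :
    Tendsto (fun n : ℕ => ‖(n : 𝕜)⁻¹ • ∑ k ∈ Icc 1 n, a k • (T ^ k) x‖) atTop (nhds 0) :=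
  stmt5_general a ha_bdd ha_o T hT x fun m ↦ hx ((T ^ m) x)
end
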